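/- arXiv:1411.3415 — 3 statements merged into one kernel-verified Lean document; each statement's English description precedes it below -/
import Mathlib

section
/- For every integer N ≥ 1 there exist a real number γ with 0 < γ < 1, positive real numbers ε₁, …, ε_N, and distinct points z₁, …, z_N ∈ ℂ such that the equation conj(z) = −γ·z + Σ_{j=1}^N ε_j/(z − z_j) has exactly 5N − 1 solutions z ∈ ℂ ∖ {z₁, …, z_N}. -/
/-- The set of solutions `w ∈ ℂ ∖ {z₁, …, z_N}` of the gravitational lensing equation
`conj w = −γ·w + Σ_j ε_j/(w − z_j)`. -/
def lensSolutions (N : ℕ) (γ : ℝ) (ε : Fin N → ℝ) (z : Fin N → ℂ) : Set ℂ :=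
  {w | (∀ j, w ≠ z j) ∧
    (starRingEnd ℂ) w = -(γ : ℂ) * w + ∑ j, (ε j : ℂ) / (w - z j)}

/-!
Put `q = 1 / γ` and place the masses at the zeros of the Chebyshev polynomial `U_N`, with
`Σ_j ε_j / (w - z_j) = (q - q⁻¹) / 2 * U_{N-1}(w) / U_N(w)`. The Joukowski substitution
`w = (ζ + ζ⁻¹) / 2` turns the equation with shear `-γ` into `B(|ζ|²) * B(ζ / conj ζ) = 1`, where
`B(t) = t ^ (N + 1) * (q - t) / (q * t - 1)`. On the unit circle `B` is unimodular and on the real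
line it is real, so both factors are `1` or both are `-1`.

Counting sign changes on the circle and comparing with the degree `N + 2`, each of the levels
`B = ±1` consists of `N` points on the circle and a pair `ρ`, `ρ⁻¹` with `ρ > 1` real; for the
level `1`, which always contains `1`, this requires `(N + 2) * γ < N`. With `|ζ|² = ρ` each of the
`N` phases has two square roots `ζ`, giving `2 * N` images per level. On `|ζ| = 1` only the level
`B = 1` occurs; one square root per phase is discarded, as `ζ` and `ζ⁻¹` give the same `w`, and so
is the phase `1`, which leaves `N - 1` images. Rotating the plane by a right angle changes the sign
of the shear.
-/

namespace ChebyshevLens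

open Polynomial
open scoped ComplexConjugate

section AlternatingSigns

theorem exists_strictMono_zeros_of_alternating {g : ℝ → ℝ} (hg : Continuous g) {a : ℕ → ℝ}
    (ha : StrictMono a) {K : ℕ} (hsign : ∀ k ≤ K, 0 < (-1 : ℝ) ^ k * g (a k)) :
    ∃ c : Fin K → ℝ, StrictMono c ∧ ∀ k, c k ∈ Set.Ioo (a 0) (a K) ∧ g (c k) = 0 := by
  have zero_between (k : Fin K) : ∃ c ∈ Set.Ioo (a k) (a (k + 1)), g c = 0 := by
    have hcont : ContinuousOn (fun x ↦ (-1 : ℝ) ^ (k : ℕ) * g x) (Set.Icc (a k) (a (k + 1))) := by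
      fun_prop
    have hright := hsign (k + 1) k.2
    rw [pow_succ] at hright
    obtain ⟨c, hc, hgc⟩ := intermediate_value_Ioo' (ha (Nat.lt_succ_self k)).le hcont
      ⟨by linarith, hsign k k.2.le⟩
    exact ⟨c, hc, by simpa using hgc⟩
  choose c hc hgc using zero_between
  refine ⟨c, fun i j hij ↦ ?_, fun k ↦ ⟨⟨?_, ?_⟩, hgc k⟩⟩
  · exact (hc i).2.trans_le ((ha.monotone hij).trans (hc j).1.le)
  · exact (ha.monotone (Nat.zero_le _)).trans_lt (hc k).1
  · exact (hc k).2.trans_le (ha.monotone k.2)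

theorem exists_strictMono_mul_sin_eq {N : ℕ} {q : ℝ} (hq : 1 < q) (σ : ℝ) {h : ℝ → ℝ}
    (hcont : Continuous h) (hbound : ∀ φ, |h φ| ≤ 1) :
    ∃ (a : ℝ) (c : Fin N → ℝ), StrictMono c ∧
      ∀ k, c k ∈ Set.Ioo a (a + 2 * Real.pi) ∧ q * Real.sin (N * c k / 2 - σ) = h (c k) := by
  rcases N.eq_zero_or_pos with rfl | hN
  · exact ⟨0, finZeroElim, Subsingleton.strictMono _, finZeroElim⟩
  have hN' : (N : ℝ) ≠ 0 := by exact_mod_cast hN.ne'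
  set a : ℕ → ℝ := fun k ↦ (2 * k * Real.pi + Real.pi + 2 * σ) / N with ha
  have ha_mono : StrictMono a := strictMono_nat_of_lt_succ fun k ↦ by
    simp only [ha]
    gcongr
    simp
  have ha_period : a N = a 0 + 2 * Real.pi := by
    simp only [ha]
    field_simp
    push_cast
    ring
  have hsin (k : ℕ) : Real.sin (N * a k / 2 - σ) = (-1) ^ k := by
    have harg : N * a k / 2 - σ = Real.pi / 2 + k * Real.pi := by
      simp only [ha]
      field_simp
      ring
    rw [harg, Real.sin_add_nat_mul_pi, Real.sin_pi_div_two, mul_one]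
  have hsign (k : ℕ) : 0 < (-1) ^ k * (q * Real.sin (N * a k / 2 - σ) - h (a k)) := by
    obtain ⟨hlow, hhigh⟩ := abs_le.1 (hbound (a k))
    rw [hsin]
    rcases neg_one_pow_eq_or ℝ k with hk | hk <;> rw [hk] <;> linarith
  obtain ⟨c, hc_mono, hc⟩ := exists_strictMono_zeros_of_alternating (K := N)
    (g := fun φ ↦ q * Real.sin (N * φ / 2 - σ) - h φ) (by fun_prop) ha_mono fun k _ ↦ hsign k
  exact ⟨a 0, c, hc_mono, fun k ↦ ⟨ha_period ▸ (hc k).1, sub_eq_zero.1 (hc k).2⟩⟩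

end AlternatingSigns

section BlaschkeLevel

/-- The level set `{B = s}` of the quotient `B t = t ^ (N + 1) * (q - t) / (q * t - 1)`, which for
real `q` has modulus one on the unit circle. The denominator is cleared, so the pole `t = q⁻¹` is
not a member when `1 < q`. -/
def blaschkeLevel (N : ℕ) (q : ℝ) (s : ℂ) : Set ℂ :=
  {t | t ^ (N + 1) * (q - t) = s * (q * t - 1)}

variable {N : ℕ} {q : ℝ} {s t : ℂ}

theorem mem_blaschkeLevel : t ∈ blaschkeLevel N q s ↔ t ^ (N + 1) * (q - t) = s * (q * t - 1) :=
  Iff.rfl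

theorem ne_zero_of_mem_blaschkeLevel (hs : s ≠ 0) (ht : t ∈ blaschkeLevel N q s) : t ≠ 0 := by
  rintro rfl
  simp [mem_blaschkeLevel, hs] at ht

theorem encard_blaschkeLevel_le (N : ℕ) (q : ℝ) (hs : s ≠ 0) :
    (blaschkeLevel N q s).encard ≤ (N + 2 : ℕ) := by
  set P : ℂ[X] := X ^ (N + 1) * (C (q : ℂ) - X) - C s * (C (q : ℂ) * X - 1) with hP
  have hP0 : P ≠ 0 := fun h ↦ hs (by simpa [hP] using congrArg (eval 0) h)
  have hdeg : P.natDegree ≤ N + 2 := by rw [hP]; compute_degree!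
  have hroots : blaschkeLevel N q s = P.rootSet ℂ := by
    ext t
    rw [mem_rootSet_of_ne hP0, mem_blaschkeLevel]
    simp [hP, sub_eq_zero]
  rw [hroots, ← (P.rootSet_finite ℂ).cast_ncard_eq]
  exact_mod_cast (P.ncard_rootSet_le ℂ).trans hdeg

theorem inv_conj_mem_blaschkeLevel (hs : ‖s‖ = 1) (ht : t ∈ blaschkeLevel N q s) :
    (conj t)⁻¹ ∈ blaschkeLevel N q s := by
  have hs0 : s ≠ 0 := norm_ne_zero_iff.1 (by simp [hs])
  have ht0 : conj t ≠ 0 := (_root_.map_ne_zero _).2 (ne_zero_of_mem_blaschkeLevel hs0 ht)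
  have hss : s * conj s = 1 := by rw [Complex.mul_conj', hs]; norm_num
  have hconj := congrArg conj (mem_blaschkeLevel.1 ht)
  simp only [map_mul, map_pow, map_sub, Complex.conj_ofReal, map_one] at hconj
  rw [mem_blaschkeLevel, inv_pow]
  field_simp
  linear_combination -s * hconj - (q * conj t - 1) * hss

theorem exp_mem_blaschkeLevel {σ φ : ℝ}
    (h : q * Real.sin (N * φ / 2 - σ) = Real.sin ((N + 2) * φ / 2 - σ)) :
    Complex.exp (φ * Complex.I) ∈ blaschkeLevel N q (Complex.exp (2 * σ * Complex.I)) := by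
  set α : ℂ := (N * φ / 2 - σ) * Complex.I with hα
  set β : ℂ := ((N + 2) * φ / 2 - σ) * Complex.I with hβ
  have hsin : q * (Complex.exp α - Complex.exp (-α)) = Complex.exp β - Complex.exp (-β) := by
    have h' := congrArg ((↑) : ℝ → ℂ) h
    push_cast [Complex.sin] at h'
    rw [neg_mul, neg_mul, ← hα, ← hβ] at h'
    linear_combination 2 * Complex.I * h' + (q * (Complex.exp α - Complex.exp (-α)) -
      (Complex.exp β - Complex.exp (-β))) * Complex.I_sq
  have hφ : Complex.exp (φ * Complex.I) = Complex.exp β * Complex.exp (-α) := by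
    rw [← Complex.exp_add]; congr 1; rw [hα, hβ]; ring
  have hpow : Complex.exp (φ * Complex.I) ^ (N + 1) =
      Complex.exp (2 * σ * Complex.I) * (Complex.exp α * Complex.exp β) := by
    rw [← Complex.exp_nat_mul, ← Complex.exp_add, ← Complex.exp_add]
    congr 1; rw [hα, hβ]; push_cast; ring
  have hαα : Complex.exp α * Complex.exp (-α) = 1 := by rw [← Complex.exp_add]; simp
  have hββ : Complex.exp β * Complex.exp (-β) = 1 := by rw [← Complex.exp_add]; simp
  rw [mem_blaschkeLevel, hpow, hφ]
  linear_combination Complex.exp (2 * σ * Complex.I) * (Complex.exp β * hsin -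
    Complex.exp β ^ 2 * hαα - hββ)

theorem le_encard_blaschkeLevel_inter_sphere (N : ℕ) (hq : 1 < q) (hs : ‖s‖ = 1) :
    N ≤ (blaschkeLevel N q s ∩ Metric.sphere 0 1).encard := by
  set σ : ℝ := s.arg / 2 with hσ
  have hsσ : Complex.exp (2 * σ * Complex.I) = s := by
    rw [hσ, Complex.ofReal_div, Complex.ofReal_ofNat, mul_div_cancel₀ _ two_ne_zero]
    simpa [hs] using s.norm_mul_exp_arg_mul_I
  obtain ⟨a, c, hc_mono, hc⟩ := exists_strictMono_mul_sin_eq (N := N) hq σ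
    (h := fun φ ↦ Real.sin ((N + 2) * φ / 2 - σ)) (by fun_prop) fun _ ↦ Real.abs_sin_le_one _
  have hperiod : |a - (a + 2 * Real.pi)| ≤ 2 * Real.pi := by
    rw [sub_add_cancel_left, abs_neg, abs_of_pos Real.two_pi_pos]
  have hinj : Function.Injective fun k ↦ circleMap 0 1 (c k) := fun i j hij ↦
    hc_mono.injective <| injOn_circleMap_of_abs_sub_le one_ne_zero hperiod
      (Set.Ioc_subset_uIoc (Set.Ioo_subset_Ioc_self (hc i).1))
      (Set.Ioc_subset_uIoc (Set.Ioo_subset_Ioc_self (hc j).1)) hij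
  have hrange : Set.range (fun k ↦ circleMap 0 1 (c k)) ⊆
      blaschkeLevel N q s ∩ Metric.sphere 0 1 := by
    rintro _ ⟨k, rfl⟩
    refine ⟨?_, circleMap_mem_sphere 0 zero_le_one _⟩
    simpa [circleMap, hsσ] using exp_mem_blaschkeLevel (hc k).2
  calc (N : ℕ∞) = ENat.card (Fin N) := by simp
    _ ≤ _ := hinj.encard_range
    _ ≤ _ := Set.encard_le_encard hrange

theorem encard_blaschkeLevel_sdiff_sphere_le (hq : 1 < q) (hs : ‖s‖ = 1) :
    (blaschkeLevel N q s \ Metric.sphere 0 1).encard ≤ 2 := by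
  have hs0 : s ≠ 0 := norm_ne_zero_iff.1 (by simp [hs])
  refine (ENat.add_le_add_iff_right (ENat.natCast_ne_top N)).1 ?_
  calc _ ≤ (blaschkeLevel N q s \ Metric.sphere 0 1).encard +
        (blaschkeLevel N q s ∩ Metric.sphere 0 1).encard := by
        gcongr; exact le_encard_blaschkeLevel_inter_sphere N hq hs
    _ = (blaschkeLevel N q s).encard := Set.encard_sdiff_add_encard_inter _ _
    _ ≤ 2 + N := (encard_blaschkeLevel_le N q hs0).trans_eq (by push_cast; rw [add_comm])

variable {ρ : ℂ}

theorem ne_inv_conj_of_one_lt_norm (hρ : 1 < ‖ρ‖) : ρ ≠ (conj ρ)⁻¹ := fun h ↦ by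
  have hnorm := congrArg norm h
  rw [norm_inv, RCLike.norm_conj] at hnorm
  exact (hρ.trans_le hnorm.le).not_gt (inv_lt_one_of_one_lt₀ hρ)

theorem blaschkeLevel_sdiff_sphere (hq : 1 < q) (hs : ‖s‖ = 1) (hρ : ρ ∈ blaschkeLevel N q s)
    (hρ1 : 1 < ‖ρ‖) : blaschkeLevel N q s \ Metric.sphere 0 1 = {ρ, (conj ρ)⁻¹} := by
  refine (Set.Finite.eq_of_subset_of_encard_le (by simp) ?_ ?_).symm
  · rintro t (rfl | rfl)
    · exact ⟨hρ, by simpa using hρ1.ne'⟩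
    · exact ⟨inv_conj_mem_blaschkeLevel hs hρ, by simpa using hρ1.ne'⟩
  · rw [Set.encard_pair (ne_inv_conj_of_one_lt_norm hρ1)]
    exact encard_blaschkeLevel_sdiff_sphere_le hq hs

theorem eq_of_mem_blaschkeLevel_of_one_lt_norm (hq : 1 < q) (hs : ‖s‖ = 1)
    (hρ : ρ ∈ blaschkeLevel N q s) (hρ1 : 1 < ‖ρ‖) (ht : t ∈ blaschkeLevel N q s)
    (ht1 : 1 < ‖t‖) : t = ρ := by
  have hmem : t ∈ ({ρ, (conj ρ)⁻¹} : Set ℂ) :=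
    blaschkeLevel_sdiff_sphere hq hs hρ hρ1 ▸ ⟨ht, by simpa using ht1.ne'⟩
  refine hmem.resolve_right fun h ↦ ht1.not_gt ?_
  rw [Set.mem_singleton_iff.1 h, norm_inv, RCLike.norm_conj]
  exact inv_lt_one_of_one_lt₀ hρ1

theorem one_lt_norm_ofReal {x : ℝ} (hx : 1 < x) : 1 < ‖(x : ℂ)‖ := by
  simpa using hx.trans_le (le_abs_self x)

theorem eq_of_mem_blaschkeLevel_one_lt (hq : 1 < q) (hs : ‖s‖ = 1) {ρ x : ℝ} (hρ1 : 1 < ρ)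
    (hρ : (ρ : ℂ) ∈ blaschkeLevel N q s) (hx1 : 1 < x) (hx : (x : ℂ) ∈ blaschkeLevel N q s) :
    x = ρ := by
  exact_mod_cast eq_of_mem_blaschkeLevel_of_one_lt_norm hq hs hρ (one_lt_norm_ofReal hρ1) hx
    (one_lt_norm_ofReal hx1)

theorem encard_blaschkeLevel_inter_sphere (hq : 1 < q) (hs : ‖s‖ = 1)
    (hρ : ρ ∈ blaschkeLevel N q s) (hρ1 : 1 < ‖ρ‖) :
    (blaschkeLevel N q s ∩ Metric.sphere 0 1).encard = N := by
  have hs0 : s ≠ 0 := norm_ne_zero_iff.1 (by simp [hs])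
  refine le_antisymm ?_ (le_encard_blaschkeLevel_inter_sphere N hq hs)
  refine (ENat.add_le_add_iff_left (ENat.natCast_ne_top 2)).1 ?_
  calc _ = (blaschkeLevel N q s \ Metric.sphere 0 1).encard +
        (blaschkeLevel N q s ∩ Metric.sphere 0 1).encard := by
        rw [blaschkeLevel_sdiff_sphere hq hs hρ hρ1,
          Set.encard_pair (ne_inv_conj_of_one_lt_norm hρ1)]; rfl
    _ = (blaschkeLevel N q s).encard := Set.encard_sdiff_add_encard_inter _ _
    _ ≤ (2 : ℕ) + N := (encard_blaschkeLevel_le N q hs0).trans_eq (by push_cast; rw [add_comm])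

theorem one_mem_blaschkeLevel_one : 1 ∈ blaschkeLevel N q 1 := by simp [mem_blaschkeLevel]

theorem exists_mem_blaschkeLevel_neg_one (N : ℕ) (hq : 1 < q) :
    ∃ ρ : ℝ, 1 < ρ ∧ (ρ : ℂ) ∈ blaschkeLevel N q (-1) := by
  have hcont : ContinuousOn (fun x : ℝ ↦ x ^ (N + 1) * (x - q) - (q * x - 1))
    (Set.Icc q (2 * q)) := by fun_prop
  have hpow : 2 * q ≤ (2 * q) ^ (N + 1) := le_self_pow₀ (by linarith) N.succ_ne_zero
  have hleft : q ^ (N + 1) * (q - q) - (q * q - 1) < 0 := by nlinarith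
  have hright : 0 < (2 * q) ^ (N + 1) * (2 * q - q) - (q * (2 * q) - 1) := by nlinarith
  obtain ⟨ρ, hρ, hρ0⟩ := intermediate_value_Ioo (by linarith) hcont ⟨hleft, hright⟩
  refine ⟨ρ, hq.trans hρ.1, ?_⟩
  have hρ_level := congrArg ((↑) : ℝ → ℂ) hρ0
  push_cast at hρ_level
  rw [mem_blaschkeLevel]
  linear_combination -hρ_level

-- The level equation always has the root `1`; dividing it out leaves a sign change on `[1, q]`.
theorem exists_mem_blaschkeLevel_one (hq : 1 < q) (hqN : 2 < (q - 1) * N) :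
    ∃ ρ : ℝ, 1 < ρ ∧ (ρ : ℂ) ∈ blaschkeLevel N q 1 := by
  set g : ℝ → ℝ := fun x ↦ (q - 1) * x * ∑ i ∈ Finset.range N, x ^ i - 1 - x ^ (N + 1) with hg
  have hfactor (x : ℝ) : (x - 1) * g x = x ^ (N + 1) * (q - x) - (q * x - 1) := by
    linear_combination (q - 1) * x * geom_sum_mul x N
  have hg_one : 0 < g 1 := by simp [hg]; linarith
  have hg_q : g q < 0 := by
    refine neg_of_mul_neg_right ?_ (sub_pos.2 hq).le
    rw [hfactor]
    nlinarith
  obtain ⟨ρ, hρ, hρ0⟩ := intermediate_value_Ioo' hq.le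
    (by fun_prop : ContinuousOn g (Set.Icc 1 q)) ⟨hg_q, hg_one⟩
  refine ⟨ρ, hρ.1, ?_⟩
  have hρ_level := congrArg ((↑) : ℝ → ℂ) (hfactor ρ)
  rw [hρ0] at hρ_level
  push_cast at hρ_level
  rw [mem_blaschkeLevel]
  linear_combination -hρ_level

theorem notMem_blaschkeLevel_neg_one_of_mem_one {x : ℝ} (hx : 1 < q * x)
    (h : (x : ℂ) ∈ blaschkeLevel N q 1) : (x : ℂ) ∉ blaschkeLevel N q (-1) := fun h' ↦ by
  have h2 : ((q * x - 1 : ℝ) : ℂ) = 0 := by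
    push_cast
    linear_combination (mem_blaschkeLevel.1 h' - mem_blaschkeLevel.1 h) / 2
  exact (sub_pos.2 hx).ne' (by exact_mod_cast h2)

theorem norm_ofReal_sub_eq_norm_ofReal_mul_sub_one (q : ℝ) {y : ℂ} (hy : ‖y‖ = 1) :
    ‖(q : ℂ) - y‖ = ‖q * y - 1‖ := by
  have hyy : y * conj y = 1 := by rw [Complex.mul_conj', hy]; norm_num
  calc ‖(q : ℂ) - y‖ = ‖y‖ * ‖conj ((q : ℂ) - y)‖ := by rw [hy, one_mul, RCLike.norm_conj]
    _ = ‖q * y - 1‖ := by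
      rw [← norm_mul, map_sub, Complex.conj_ofReal, mul_sub, hyy, mul_comm]

-- The second factor is unimodular on the circle, so the first one, being real, is `±1`.
theorem blaschke_mul_eq_iff {x : ℝ} {y : ℂ} (hq : 1 < q) (hx : 1 < q * x) (hy : ‖y‖ = 1) :
    x ^ (N + 1) * (q - x) * (y ^ (N + 1) * (q - y)) = (q * x - 1) * (q * y - 1) ↔
      (x : ℂ) ∈ blaschkeLevel N q 1 ∧ y ∈ blaschkeLevel N q 1 ∨
      (x : ℂ) ∈ blaschkeLevel N q (-1) ∧ y ∈ blaschkeLevel N q (-1) := by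
  have hnorm := norm_ofReal_sub_eq_norm_ofReal_mul_sub_one q hy
  have hqy : (q : ℂ) - y ≠ 0 := fun h ↦ by
    have := congrArg norm (sub_eq_zero.1 h)
    rw [hy, Complex.norm_real, Real.norm_eq_abs, abs_of_pos (by linarith)] at this
    exact hq.ne' this
  have hqx : (q * x - 1 : ℂ) ≠ 0 := by exact_mod_cast (sub_pos.2 hx).ne'
  refine ⟨fun h ↦ ?_, ?_⟩
  · have habs : |x ^ (N + 1) * (q - x)| = |q * x - 1| := by
      have h' := congrArg norm h
      rw [norm_mul, norm_mul (y ^ (N + 1)), norm_pow, hy, one_pow, one_mul, norm_mul (_ - _),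
        ← hnorm] at h'
      exact_mod_cast mul_right_cancel₀ (norm_ne_zero_iff.2 hqy) h'
    rcases abs_eq_abs.1 habs with hlevel | hlevel <;>
      replace hlevel := congrArg ((↑) : ℝ → ℂ) hlevel <;> push_cast at hlevel
    · refine Or.inl ⟨by rw [mem_blaschkeLevel, hlevel, one_mul], mul_left_cancel₀ hqx ?_⟩
      rw [one_mul, ← h, hlevel]
    · refine Or.inr ⟨by rw [mem_blaschkeLevel, hlevel, neg_one_mul], mul_left_cancel₀ hqx ?_⟩
      linear_combination -h + y ^ (N + 1) * (q - y) * hlevel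
  · rintro (⟨hx, hy⟩ | ⟨hx, hy⟩) <;> rw [mem_blaschkeLevel.1 hx, mem_blaschkeLevel.1 hy] <;> ring

end BlaschkeLevel

section PolarFiber

/-- The points of squared modulus `ρ` whose phase quotient `ζ / conj ζ` lies in `A`. -/
def polarFiber (ρ : ℝ) (A : Set ℂ) : Set ℂ :=
  {ζ | ‖ζ‖ ^ 2 = ρ ∧ ζ / conj ζ ∈ A}

variable {A : Set ℂ} {ρ : ℝ}

theorem disjoint_polarFiber {ρ' : ℝ} (h : ρ ≠ ρ') (A B : Set ℂ) :
    Disjoint (polarFiber ρ A) (polarFiber ρ' B) :=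
  Set.disjoint_left.2 fun _ hζ hζ' ↦ h (hζ.1.symm.trans hζ'.1)

theorem sq_eq_norm_sq_mul_div_conj (ζ : ℂ) : ζ ^ 2 = (‖ζ‖ ^ 2 : ℝ) * (ζ / conj ζ) := by
  rcases eq_or_ne ζ 0 with rfl | hζ
  · simp
  have hζ' : conj ζ ≠ 0 := (_root_.map_ne_zero _).2 hζ
  rw [Complex.ofReal_pow, ← Complex.mul_conj']
  field_simp

theorem norm_div_conj {ζ : ℂ} (hζ : ζ ≠ 0) : ‖ζ / conj ζ‖ = 1 := by
  rw [norm_div, RCLike.norm_conj, div_self (norm_ne_zero_iff.2 hζ)]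

theorem encard_preimage_sq {S : Set ℂ} (hS : 0 ∉ S) :
    ((· ^ 2) ⁻¹' S : Set ℂ).encard = 2 * S.encard := by
  set r : ℂ → ℂ := fun y ↦ y ^ ((2 : ℕ) : ℂ)⁻¹
  have hr_sq (y : ℂ) : r y ^ 2 = y := Complex.cpow_nat_inv_pow y two_ne_zero
  have hr_inj : Function.Injective r :=
    Function.LeftInverse.injective (g := (· ^ 2)) hr_sq
  have hunion : ((· ^ 2) ⁻¹' S : Set ℂ) = r '' S ∪ (fun y ↦ -r y) '' S := by
    ext ζ
    refine ⟨fun hζ ↦ ?_, ?_⟩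
    · rcases sq_eq_sq_iff_eq_or_eq_neg.1 (hr_sq (ζ ^ 2)) with h | h
      · exact Or.inl ⟨_, hζ, h⟩
      · exact Or.inr ⟨_, hζ, neg_eq_iff_eq_neg.2 h⟩
    · rintro (⟨y, hy, rfl⟩ | ⟨y, hy, rfl⟩)
      · simpa [hr_sq] using hy
      · simpa [hr_sq] using hy
  have hdisj : Disjoint (r '' S) ((fun y ↦ -r y) '' S) := by
    rw [Set.disjoint_left]
    rintro _ ⟨y, hy, rfl⟩ ⟨y', -, h⟩
    have hyy' : y' = y := by rw [← hr_sq y, ← h, neg_sq, hr_sq]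
    have hy0 : r y = 0 := by rw [hyy'] at h; linear_combination -h / 2
    exact hS (by rwa [← hr_sq y, hy0, zero_pow two_ne_zero] at hy)
  have hr_neg_inj : Function.Injective fun y ↦ -r y := neg_injective.comp hr_inj
  rw [hunion, Set.encard_union_eq hdisj, hr_inj.encard_image, hr_neg_inj.encard_image, two_mul]

theorem polarFiber_eq_preimage_sq (hρ : 0 < ρ) (hA : A ⊆ Metric.sphere 0 1) :
    polarFiber ρ A = (· ^ 2) ⁻¹' ((fun y ↦ (ρ : ℂ) * y) '' A) := by
  have hρ' : (ρ : ℂ) ≠ 0 := by exact_mod_cast hρ.ne'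
  ext ζ
  refine ⟨fun ⟨hnorm, hphase⟩ ↦ ⟨_, hphase, ?_⟩, fun ⟨y, hy, hζ⟩ ↦ ?_⟩
  · exact (hnorm ▸ sq_eq_norm_sq_mul_div_conj ζ).symm
  · replace hζ : ρ * y = ζ ^ 2 := hζ
    have hnorm : ‖ζ‖ ^ 2 = ρ := by
      rw [← norm_pow, ← hζ, norm_mul, mem_sphere_zero_iff_norm.1 (hA hy), Complex.norm_real,
        Real.norm_of_nonneg hρ.le, mul_one]
    have hphase : ζ / conj ζ = y := mul_left_cancel₀ hρ' (by
      rw [← hnorm, ← sq_eq_norm_sq_mul_div_conj, hnorm, hζ])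
    exact ⟨hnorm, hphase ▸ hy⟩

theorem encard_polarFiber (hρ : 0 < ρ) (hA : A ⊆ Metric.sphere 0 1) :
    (polarFiber ρ A).encard = 2 * A.encard := by
  have hρ' : (ρ : ℂ) ≠ 0 := by exact_mod_cast hρ.ne'
  rw [polarFiber_eq_preimage_sq hρ hA, encard_preimage_sq,
    (mul_right_injective₀ hρ').encard_image]
  rintro ⟨y, hy, h⟩
  exact ne_zero_of_mem_unit_sphere ⟨y, hA hy⟩ ((mul_eq_zero.1 h).resolve_left hρ')

theorem exists_sq_eq_of_im_pos {y : ℂ} (hy : ‖y‖ = 1) (hy1 : y ≠ 1) :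
    ∃ ζ : ℂ, 0 < ζ.im ∧ ζ ^ 2 = y := by
  obtain ⟨ζ, hζ⟩ := IsAlgClosed.exists_pow_nat_eq y two_pos
  have him : ζ.im ≠ 0 := fun him ↦ hy1 <| by
    have hreal : ζ = (ζ.re : ℂ) := Complex.ext rfl him
    have hre : ζ.re ^ 2 = 1 := by
      rw [← hy, ← hζ, norm_pow, hreal, Complex.norm_real, Real.norm_eq_abs, sq_abs,
        Complex.ofReal_re]
    rw [← hζ, hreal]
    exact_mod_cast hre
  rcases him.lt_or_gt with hneg | hpos
  · exact ⟨-ζ, by simpa using hneg, by rw [neg_sq, hζ]⟩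
  · exact ⟨ζ, hpos, hζ⟩

theorem encard_polarFiber_one_im_pos (hA : A ⊆ Metric.sphere 0 1) :
    {ζ ∈ polarFiber 1 A | 0 < ζ.im}.encard = (A \ {1}).encard := by
  have hinj : Set.InjOn (· ^ 2) {ζ ∈ polarFiber 1 A | 0 < ζ.im} := fun ζ hζ ξ hξ h ↦
    (sq_eq_sq_iff_eq_or_eq_neg.1 h).resolve_right fun hneg ↦ by
      have him := congrArg Complex.im hneg
      rw [Complex.neg_im] at him
      linarith [hζ.2, hξ.2]
  rw [← hinj.encard_image, polarFiber_eq_preimage_sq one_pos hA]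
  congr 1
  ext y
  simp only [Complex.ofReal_one, one_mul, Set.image_id']
  refine ⟨?_, fun ⟨hy, hy1⟩ ↦ ?_⟩
  · rintro ⟨ζ, ⟨hζ, him⟩, rfl⟩
    refine ⟨hζ, fun h1 ↦ ?_⟩
    rcases sq_eq_one_iff.1 h1 with rfl | rfl <;> simp at him
  · obtain ⟨ζ, him, hζ⟩ := exists_sq_eq_of_im_pos (mem_sphere_zero_iff_norm.1 (hA hy)) hy1
    exact ⟨ζ, ⟨by simpa [hζ] using hy, him⟩, hζ⟩

end PolarFiber

section Joukowski

/-- The Joukowski map, which conjugates Chebyshev polynomials to powers. -/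
noncomputable def joukowski (ζ : ℂ) : ℂ := (ζ + ζ⁻¹) / 2

/-- The exterior of the unit disc together with the open upper half of the unit circle: a
fundamental domain for `ζ ↦ ζ⁻¹` with the fixed points `±1` removed. -/
def joukowskiDomain : Set ℂ := {ζ | 1 < ‖ζ‖ ∨ ‖ζ‖ = 1 ∧ 0 < ζ.im}

variable {ζ w : ℂ}

theorem one_le_norm_of_mem_joukowskiDomain (hζ : ζ ∈ joukowskiDomain) : 1 ≤ ‖ζ‖ :=
  hζ.elim le_of_lt fun h ↦ h.1.ge

theorem ne_zero_of_mem_joukowskiDomain (hζ : ζ ∈ joukowskiDomain) : ζ ≠ 0 :=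
  norm_pos_iff.1 (one_pos.trans_le (one_le_norm_of_mem_joukowskiDomain hζ))

theorem sq_ne_one_of_mem_joukowskiDomain (hζ : ζ ∈ joukowskiDomain) : ζ ^ 2 ≠ 1 := fun h ↦ by
  rcases sq_eq_one_iff.1 h with rfl | rfl <;> simp [joukowskiDomain] at hζ

theorem injOn_joukowski : Set.InjOn joukowski joukowskiDomain := fun a ha b hb h ↦ by
  have ha0 := ne_zero_of_mem_joukowskiDomain ha
  have hb0 := ne_zero_of_mem_joukowskiDomain hb
  have hprod : (a - b) * (a * b - 1) = 0 := by
    simp only [joukowski] at h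
    field_simp at h
    linear_combination h
  refine (mul_eq_zero.1 hprod).elim sub_eq_zero.1 fun hab ↦ ?_
  have hinv : b = a⁻¹ := eq_inv_of_mul_eq_one_right (sub_eq_zero.1 hab)
  have ha1 := one_le_norm_of_mem_joukowskiDomain ha
  have hb1 : 1 ≤ ‖a‖⁻¹ := by
    simpa only [hinv, norm_inv] using one_le_norm_of_mem_joukowskiDomain hb
  have hnorm : ‖a‖ = 1 := le_antisymm ((one_le_inv₀ (one_pos.trans_le ha1)).1 hb1) ha1
  have him_a : 0 < a.im := (ha.resolve_left hnorm.not_gt).2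
  have him_b : 0 < b.im := (hb.resolve_left (by simp [hinv, hnorm])).2
  rw [hinv, Complex.inv_im, Complex.normSq_eq_norm_sq, hnorm] at him_b
  linarith

theorem exists_joukowski_eq (hw : w ≠ 1) (hw' : w ≠ -1) :
    ∃ ζ ∈ joukowskiDomain, joukowski ζ = w := by
  obtain ⟨d, hd⟩ := IsAlgClosed.exists_pow_nat_eq (w ^ 2 - 1) two_pos
  set ζ := w + d with hζ
  have hprod : ζ * (w - d) = 1 := by linear_combination -hd
  have hζ0 : ζ ≠ 0 := left_ne_zero_of_mul_eq_one hprod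
  have hinv : w - d = ζ⁻¹ := eq_inv_of_mul_eq_one_right hprod
  have hζw : joukowski ζ = w := by rw [joukowski, ← hinv, hζ]; ring
  have hζw' : joukowski ζ⁻¹ = w := by rw [joukowski, inv_inv, ← hinv, hζ]; ring
  rcases lt_trichotomy ‖ζ‖ 1 with h | h | h
  · refine ⟨ζ⁻¹, Or.inl ?_, hζw'⟩
    rw [norm_inv]
    exact (one_lt_inv₀ (norm_pos_iff.2 hζ0)).2 h
  · rcases lt_trichotomy ζ.im 0 with him | him | him
    · refine ⟨ζ⁻¹, Or.inr ⟨by rw [norm_inv, h, inv_one], ?_⟩, hζw'⟩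
      rw [Complex.inv_im, Complex.normSq_eq_norm_sq, h]
      linarith
    · have hreal : ζ = (ζ.re : ℂ) := Complex.ext rfl him
      rw [hreal, Complex.norm_real, Real.norm_eq_abs] at h
      rcases eq_or_eq_neg_of_abs_eq h with hre | hre <;> rw [hreal, hre] at hζw
      · exact absurd hζw.symm (by simpa [joukowski] using hw)
      · refine absurd hζw.symm ?_
        convert hw'
        norm_num [joukowski]
    · exact ⟨ζ, Or.inr ⟨h, him⟩, hζw⟩
  · exact ⟨ζ, Or.inl h, hζw⟩

end Joukowski

section PartialFractions

variable {F ι : Type*} [Field F] [Fintype ι] {P Q : F[X]} {v : ι → F}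

theorem eq_C_leadingCoeff_mul_nodal (hv : Function.Injective v) (hQ : Q.degree = Fintype.card ι)
    (hroot : ∀ i, Q.IsRoot (v i)) :
    Q = C Q.leadingCoeff * Lagrange.nodal Finset.univ v := by
  have hQ0 : Q ≠ 0 := by rintro rfl; simp at hQ
  have hlead : Q.leadingCoeff ≠ 0 := leadingCoeff_ne_zero.2 hQ0
  refine eq_of_degree_sub_lt_of_eval_index_eq Finset.univ hv.injOn ?_ fun i _ ↦ ?_
  · rw [Finset.card_univ, ← hQ]
    refine degree_sub_lt_left ?_ hQ0 ?_
    · rw [degree_C_mul hlead, Lagrange.degree_nodal, hQ, Finset.card_univ]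
    · rw [leadingCoeff_mul, leadingCoeff_C,
        Lagrange.nodal_monic.leadingCoeff, mul_one]
  · rw [hroot i, eval_mul, Lagrange.eval_nodal_at_node (Finset.mem_univ i), mul_zero]

theorem eval_eq_zero_iff_exists_eq (hv : Function.Injective v) (hQ : Q.degree = Fintype.card ι)
    (hroot : ∀ i, Q.IsRoot (v i)) {w : F} : Q.eval w = 0 ↔ ∃ i, w = v i := by
  refine ⟨fun hw ↦ ?_, by rintro ⟨i, rfl⟩; exact hroot i⟩
  have hQ0 : Q ≠ 0 := by rintro rfl; simp at hQ
  rw [eq_C_leadingCoeff_mul_nodal hv hQ hroot, eval_mul, eval_C,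
    Lagrange.eval_nodal] at hw
  have hprod := (mul_eq_zero.1 hw).resolve_left (leadingCoeff_ne_zero.2 hQ0)
  obtain ⟨i, -, hi⟩ := Finset.prod_eq_zero_iff.1 hprod
  exact ⟨i, sub_eq_zero.1 hi⟩

theorem eval_div_eval_eq_sum_of_roots (hv : Function.Injective v)
    (hQ : Q.degree = Fintype.card ι) (hroot : ∀ i, Q.IsRoot (v i))
    (hP : P.degree < Fintype.card ι) {w : F} (hw : ∀ i, w ≠ v i) :
    P.eval w / Q.eval w = ∑ i, P.eval (v i) / Q.derivative.eval (v i) / (w - v i) := by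
  classical
  have hP' := Lagrange.eq_interpolate (s := Finset.univ) hv.injOn hP
  have hnodal : (Lagrange.nodal Finset.univ v).eval w ≠ 0 :=
    Lagrange.eval_nodal_not_at_node fun i _ ↦ hw i
  rw [eq_C_leadingCoeff_mul_nodal hv hQ hroot, ← congrArg (eval w) hP'.symm,
    Lagrange.eval_interpolate_not_at_node _ fun i _ ↦ hw i, eval_mul,
    eval_C, mul_comm Q.leadingCoeff, mul_div_mul_left _ _ hnodal, Finset.sum_div]
  refine Finset.sum_congr rfl fun i hi ↦ ?_
  rw [Lagrange.nodalWeight_eq_eval_derivative_nodal hi, derivative_C_mul,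
    eval_mul, eval_C]
  simp only [div_eq_mul_inv, mul_inv]
  ring

end PartialFractions

section ChebyshevNodes

/-- The roots of the Chebyshev polynomial of the second kind of degree `N`; they are the lens
positions before the configuration is rotated by a right angle. -/
noncomputable def chebyshevNode (N : ℕ) (j : Fin N) : ℝ :=
  Real.cos ((j + 1) * Real.pi / (N + 1))

variable {N : ℕ}

theorem chebyshevNode_arg_mem_Ioo (j : Fin N) :
    ((j + 1) * Real.pi / (N + 1) : ℝ) ∈ Set.Ioo 0 Real.pi := by
  have hj : (j + 1 : ℝ) < N + 1 := by exact_mod_cast Nat.succ_lt_succ j.2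
  refine ⟨by positivity, ?_⟩
  rw [div_lt_iff₀ (by positivity), mul_comm]
  exact mul_lt_mul_of_pos_left hj Real.pi_pos

theorem chebyshevNode_injective : Function.Injective (chebyshevNode N) := fun i j h ↦ by
  have hθ := Real.injOn_cos (Set.Ioo_subset_Icc_self (chebyshevNode_arg_mem_Ioo i))
    (Set.Ioo_subset_Icc_self (chebyshevNode_arg_mem_Ioo j)) h
  have hN : (N + 1 : ℝ) ≠ 0 := by positivity
  rw [div_left_inj' hN, mul_left_inj' Real.pi_ne_zero, add_left_inj] at hθ
  exact Fin.ext (by exact_mod_cast hθ)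

theorem chebyshevNode_sq_lt_one (j : Fin N) : chebyshevNode N j ^ 2 < 1 := by
  have hsin := Real.sin_pos_of_mem_Ioo (chebyshevNode_arg_mem_Ioo j)
  rw [chebyshevNode, Real.cos_sq']
  nlinarith

theorem isRoot_U_chebyshevNode (j : Fin N) :
    (Chebyshev.U ℂ N).IsRoot (chebyshevNode N j) := by
  have hroot : chebyshevNode N j ∈ (Chebyshev.U ℝ N).roots := by
    rw [Chebyshev.roots_U_real]
    exact Finset.mem_image_of_mem (fun k : ℕ ↦ Real.cos ((k + 1) * Real.pi / (N + 1)))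
      (Finset.mem_range.2 j.2)
  rw [IsRoot, ← Chebyshev.complex_ofReal_eval_U,
    isRoot_of_mem_roots hroot, Complex.ofReal_zero]

theorem degree_U_eq_card (N : ℕ) : (Chebyshev.U ℂ N).degree = Fintype.card (Fin N) := by
  rw [Chebyshev.degree_U_natCast, Fintype.card_fin]

theorem eval_U_eq_zero_iff {w : ℂ} :
    (Chebyshev.U ℂ N).eval w = 0 ↔ ∃ j, w = chebyshevNode N j :=
  eval_eq_zero_iff_exists_eq (Complex.ofReal_injective.comp chebyshevNode_injective)
    (degree_U_eq_card N) isRoot_U_chebyshevNode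

theorem degree_U_sub_one_lt (N : ℕ) :
    (Chebyshev.U ℂ (N - 1)).degree < (N : WithBot ℕ) := by
  rcases N with _ | N
  · simp
  · rw [Nat.cast_succ, add_sub_cancel_right, Chebyshev.degree_U_natCast]
    exact_mod_cast N.lt_succ_self

variable {R : Type*} [CommRing R]

theorem eval_U_sub_one_ne_zero [Nontrivial R] {n : ℤ} {x : R}
    (hx : (Chebyshev.U R n).eval x = 0) :
    (Chebyshev.U R (n - 1)).eval x ≠ 0 := fun hx' ↦ by
  have hcross := congrArg (eval (2 * x)) (Chebyshev.S_sq_add_S_sq R (n - 1))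
  simp only [← Chebyshev.S_comp_two_mul_X, eval_comp, eval_mul,
    eval_ofNat, eval_X] at hx hx'
  simp [hx, hx'] at hcross

theorem one_sub_sq_mul_eval_derivative_U {n : ℤ} {x : R}
    (hx : (Chebyshev.U R n).eval x = 0) :
    (1 - x ^ 2) * (Chebyshev.U R n).derivative.eval x =
      (n + 1) * (Chebyshev.U R (n - 1)).eval x := by
  have hT := congrArg (eval x) (Chebyshev.T_eq_X_mul_U_sub_U R (n - 1))
  have hTU := congrArg (eval x)
    (Chebyshev.add_one_mul_T_eq_poly_in_U (R := R) n)
  rw [sub_add_cancel, show n - 1 + 2 = n + 1 by ring] at hT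
  simp only [eval_mul, eval_sub, eval_add, eval_pow,
    eval_X, eval_one, eval_intCast, hx] at hT hTU
  linear_combination hTU - (n + 1) * hT

theorem eval_U_sub_one_div_eval_U {w : ℂ} (hw : ∀ j, w ≠ chebyshevNode N j) :
    (Chebyshev.U ℂ (N - 1)).eval w / (Chebyshev.U ℂ N).eval w =
      ∑ j : Fin N, ((1 - chebyshevNode N j ^ 2) / (N + 1) : ℝ) / (w - chebyshevNode N j) := by
  rw [eval_div_eval_eq_sum_of_roots (Complex.ofReal_injective.comp chebyshevNode_injective)
    (degree_U_eq_card N) isRoot_U_chebyshevNode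
    (by simpa using degree_U_sub_one_lt N) hw]
  refine Finset.sum_congr rfl fun j _ ↦ ?_
  have hroot := isRoot_U_chebyshevNode j
  have hU := eval_U_sub_one_ne_zero hroot
  have hderiv := one_sub_sq_mul_eval_derivative_U hroot
  have hN : (N + 1 : ℂ) ≠ 0 := Nat.cast_add_one_ne_zero N
  have hderiv0 : (Chebyshev.U ℂ N).derivative.eval (chebyshevNode N j : ℂ) ≠ 0 :=
    right_ne_zero_of_mul (hderiv ▸ mul_ne_zero (by exact_mod_cast hN) hU)
  congr 1
  push_cast at hderiv ⊢
  rw [Function.comp_apply, div_eq_div_iff hderiv0 hN]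
  linear_combination -hderiv

end ChebyshevNodes

section ChebyshevLensSolutions

/-- The masses for which the deflection term is a multiple of the quotient of two consecutive
Chebyshev polynomials of the second kind. -/
noncomputable def chebyshevMass (N : ℕ) (q : ℝ) (j : Fin N) : ℝ :=
  (q - q⁻¹) / 2 * ((1 - chebyshevNode N j ^ 2) / (N + 1))

/-- The images of the lens with masses `chebyshevMass N q` at the Chebyshev nodes and shear `-q⁻¹`.
Rotating the configuration by a right angle makes the shear positive. -/
def chebyshevLensSolutions (N : ℕ) (q : ℝ) : Set ℂ :=
  lensSolutions N (-q⁻¹) (chebyshevMass N q) fun j ↦ chebyshevNode N j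

variable {N : ℕ} {q : ℝ} {ζ w : ℂ}

theorem chebyshevMass_pos (hq : 1 < q) (j : Fin N) : 0 < chebyshevMass N q j := by
  have hinv := inv_lt_one_of_one_lt₀ hq
  have hnode := chebyshevNode_sq_lt_one j
  exact mul_pos (by linarith) (div_pos (by linarith) (by positivity))

theorem mem_chebyshevLensSolutions_iff :
    w ∈ chebyshevLensSolutions N q ↔ (Chebyshev.U ℂ N).eval w ≠ 0 ∧
      conj w = (q : ℂ)⁻¹ * w +
        (q - (q : ℂ)⁻¹) / 2 * ((Chebyshev.U ℂ (N - 1)).eval w / (Chebyshev.U ℂ N).eval w) := by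
  have hnodes : (∀ j, w ≠ chebyshevNode N j) ↔ (Chebyshev.U ℂ N).eval w ≠ 0 := by
    rw [ne_eq, eval_U_eq_zero_iff, not_exists]
  refine (and_congr_right fun hw ↦ ?_).trans (and_congr_left' hnodes)
  rw [eval_U_sub_one_div_eval_U hw, Finset.mul_sum]
  simp only [chebyshevMass]
  push_cast
  simp only [neg_neg, mul_div_assoc]

theorem eval_U_joukowski (hζ : ζ ≠ 0) (n : ℤ) :
    (Chebyshev.U ℂ n).eval (joukowski ζ) * (ζ - ζ⁻¹) = ζ ^ (n + 1) - (ζ ^ (n + 1))⁻¹ := by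
  obtain ⟨θ, rfl⟩ : ∃ θ, Complex.exp θ = ζ := ⟨_, Complex.exp_log hζ⟩
  have h := Chebyshev.U_complex_cosh θ n
  rw [Complex.cosh, Complex.sinh, Complex.sinh, Complex.exp_neg, Complex.exp_neg] at h
  rw [joukowski, ← Complex.exp_int_mul]
  push_cast
  linear_combination 2 * h

theorem eval_U_joukowski_mul_pow (hζ : ζ ≠ 0) (N : ℕ) :
    (Chebyshev.U ℂ N).eval (joukowski ζ) * (ζ ^ 2 - 1) * ζ ^ N = ζ ^ (2 * N + 2) - 1 := by
  have h := eval_U_joukowski hζ N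
  rw [← Nat.cast_succ, zpow_natCast, Nat.succ_eq_add_one, pow_succ] at h
  field_simp at h
  linear_combination h

theorem eval_U_sub_one_joukowski_mul_pow (hζ : ζ ≠ 0) (N : ℕ) :
    (Chebyshev.U ℂ (N - 1)).eval (joukowski ζ) * (ζ ^ 2 - 1) * ζ ^ N = ζ * (ζ ^ (2 * N) - 1) := by
  have h := eval_U_joukowski hζ (N - 1)
  rw [sub_add_cancel, zpow_natCast] at h
  field_simp at h
  linear_combination h

theorem eval_U_joukowski_eq_zero_iff (hζ : ζ ≠ 0) (hζ2 : ζ ^ 2 ≠ 1) :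
    (Chebyshev.U ℂ N).eval (joukowski ζ) = 0 ↔ ζ ^ (2 * N + 2) = 1 := by
  rw [← sub_eq_zero (b := (1 : ℂ)), ← eval_U_joukowski_mul_pow hζ]
  simp [sub_eq_zero, hζ, hζ2]

theorem eval_U_sub_one_div_eval_U_joukowski (hζ : ζ ≠ 0) (hζ2 : ζ ^ 2 ≠ 1) :
    (Chebyshev.U ℂ (N - 1)).eval (joukowski ζ) / (Chebyshev.U ℂ N).eval (joukowski ζ) =
      ζ * (ζ ^ (2 * N) - 1) / (ζ ^ (2 * N + 2) - 1) := by
  have hne : (ζ ^ 2 - 1) * ζ ^ N ≠ 0 := mul_ne_zero (sub_ne_zero.2 hζ2) (pow_ne_zero N hζ)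
  rw [← eval_U_joukowski_mul_pow hζ, ← eval_U_sub_one_joukowski_mul_pow hζ, mul_assoc, mul_assoc,
    mul_div_mul_right _ _ hne]

theorem joukowski_mem_chebyshevLensSolutions_iff_pow (hq : 1 < q) (hζ : ζ ≠ 0) (hζ2 : ζ ^ 2 ≠ 1) :
    joukowski ζ ∈ chebyshevLensSolutions N q ↔
      ζ ^ (2 * N + 2) * (q * conj ζ - ζ) * (ζ * conj ζ - q) =
        (conj ζ - q * ζ) * (q * (ζ * conj ζ) - 1) := by
  have hc : conj ζ ≠ 0 := by simpa using hζ
  have hq0 : (q : ℂ) ≠ 0 := by exact_mod_cast (one_pos.trans hq).ne'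
  have hq1 : (q : ℂ) ^ 2 - 1 ≠ 0 := by exact_mod_cast (by nlinarith : q ^ 2 - 1 ≠ 0)
  have hpow_ne (h : ζ ^ (2 * N + 2) * (q * conj ζ - ζ) * (ζ * conj ζ - q) =
      (conj ζ - q * ζ) * (q * (ζ * conj ζ) - 1)) : ζ ^ (2 * N + 2) ≠ 1 := fun h1 ↦ by
    have hzero : ((q : ℂ) ^ 2 - 1) * (ζ ^ 2 - 1) * conj ζ = 0 := by
      rw [h1] at h
      linear_combination h
    exact mul_ne_zero (mul_ne_zero hq1 (sub_ne_zero.2 hζ2)) hc hzero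
  rw [mem_chebyshevLensSolutions_iff, ne_eq, eval_U_joukowski_eq_zero_iff hζ hζ2,
    eval_U_sub_one_div_eval_U_joukowski hζ hζ2]
  refine Iff.trans (and_congr_right fun h1 ↦ ?_) (and_iff_right_of_imp hpow_ne)
  have hZ : ζ ^ (2 * N + 2) - 1 ≠ 0 := sub_ne_zero.2 h1
  simp only [joukowski, map_div₀, map_add, map_inv₀, Complex.conj_ofNat]
  field_simp
  constructor <;> intro h <;> linear_combination h

theorem joukowski_mem_chebyshevLensSolutions_iff (hq : 1 < q) (hζ : ζ ∈ joukowskiDomain) :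
    joukowski ζ ∈ chebyshevLensSolutions N q ↔
      ((‖ζ‖ ^ 2 : ℝ) : ℂ) ∈ blaschkeLevel N q 1 ∧ ζ / conj ζ ∈ blaschkeLevel N q 1 ∨
      ((‖ζ‖ ^ 2 : ℝ) : ℂ) ∈ blaschkeLevel N q (-1) ∧ ζ / conj ζ ∈ blaschkeLevel N q (-1) := by
  have hζ0 := ne_zero_of_mem_joukowskiDomain hζ
  have hc : conj ζ ≠ 0 := by simpa using hζ0
  have hqx : 1 < q * ‖ζ‖ ^ 2 := by
    nlinarith [one_le_pow₀ (one_le_norm_of_mem_joukowskiDomain hζ) (n := 2)]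
  rw [joukowski_mem_chebyshevLensSolutions_iff_pow hq hζ0 (sq_ne_one_of_mem_joukowskiDomain hζ),
    ← blaschke_mul_eq_iff hq hqx (norm_div_conj hζ0), Complex.ofReal_pow, ← Complex.mul_conj']
  have hpow : ζ ^ (2 * N + 2) = (ζ * conj ζ) ^ (N + 1) * (ζ / conj ζ) ^ (N + 1) := by
    rw [← mul_pow, ← mul_add_one, pow_mul]
    congr 1
    field_simp
  have hlhs : q * conj ζ - ζ = conj ζ * (q - ζ / conj ζ) := by field_simp
  have hrhs : conj ζ - q * ζ = -conj ζ * (q * (ζ / conj ζ) - 1) := by field_simp; ring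
  rw [hpow, hlhs, hrhs]
  refine Iff.trans ?_ (mul_right_inj' (neg_ne_zero.2 hc))
  constructor <;> intro h <;> linear_combination h

theorem eval_U_sub_one_div_eval_U_of_sq_eq_one (N : ℕ) (hw : w ^ 2 = 1) :
    (Chebyshev.U ℂ (N - 1)).eval w / (Chebyshev.U ℂ N).eval w = w * N / (N + 1) := by
  rcases sq_eq_one_iff.1 hw with rfl | rfl
  · simp
  · have hunit : (((N : ℤ).negOnePow : ℤ) : ℂ) ≠ 0 := by
      exact_mod_cast ((N : ℤ).negOnePow).ne_zero
    have hN : (N + 1 : ℂ) ≠ 0 := Nat.cast_add_one_ne_zero N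
    rw [Chebyshev.U_eval_neg_one, Chebyshev.U_eval_neg_one, Int.negOnePow_sub]
    push_cast [Int.negOnePow_one]
    field_simp
    ring

theorem notMem_chebyshevLensSolutions_of_sq_eq_one (hq : 1 < q) (hqN : (q - 1) * N ≠ 2)
    (hw : w ^ 2 = 1) : w ∉ chebyshevLensSolutions N q := fun h ↦ by
  have hw0 : w ≠ 0 := by rintro rfl; simp at hw
  have hconj : conj w = w := by rcases sq_eq_one_iff.1 hw with rfl | rfl <;> simp
  have heq := (mem_chebyshevLensSolutions_iff.1 h).2
  have hq0 : (q : ℂ) ≠ 0 := by exact_mod_cast (one_pos.trans hq).ne'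
  have hq1 : (q - 1 : ℂ) ≠ 0 := by exact_mod_cast (sub_pos.2 hq).ne'
  have hN : (N + 1 : ℂ) ≠ 0 := Nat.cast_add_one_ne_zero N
  rw [eval_U_sub_one_div_eval_U_of_sq_eq_one N hw, hconj] at heq
  field_simp at heq
  have hqN' : (q - 1) * N = (2 : ℂ) := mul_left_cancel₀ hq1 (by linear_combination -heq)
  exact hqN (by exact_mod_cast hqN')

theorem chebyshevLensSolutions_eq_image_joukowski (hq : 1 < q) (hqN : (q - 1) * N ≠ 2) :
    chebyshevLensSolutions N q =
      joukowski '' {ζ ∈ joukowskiDomain | joukowski ζ ∈ chebyshevLensSolutions N q} := by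
  refine (Set.image_subset_iff.2 fun ζ hζ ↦ hζ.2).antisymm' fun w hw ↦ ?_
  obtain ⟨ζ, hζ, rfl⟩ := exists_joukowski_eq (w := w)
    (fun h ↦ notMem_chebyshevLensSolutions_of_sq_eq_one hq hqN (by simp [h]) hw)
    (fun h ↦ notMem_chebyshevLensSolutions_of_sq_eq_one hq hqN (by simp [h]) hw)
  exact ⟨ζ, ⟨hζ, hw⟩, rfl⟩

variable {ρ₁ ρ₂ : ℝ}

theorem joukowski_preimage_chebyshevLensSolutions (hq : 1 < q)
    (hρ₁ : 1 < ρ₁) (hlevel₁ : (ρ₁ : ℂ) ∈ blaschkeLevel N q (-1))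
    (hρ₂ : 1 < ρ₂) (hlevel₂ : (ρ₂ : ℂ) ∈ blaschkeLevel N q 1) :
    {ζ ∈ joukowskiDomain | joukowski ζ ∈ chebyshevLensSolutions N q} =
      polarFiber ρ₁ (blaschkeLevel N q (-1) ∩ Metric.sphere 0 1) ∪
      (polarFiber ρ₂ (blaschkeLevel N q 1 ∩ Metric.sphere 0 1) ∪
      {ζ ∈ polarFiber 1 (blaschkeLevel N q 1 ∩ Metric.sphere 0 1) | 0 < ζ.im}) := by
  have mem_domain {ζ : ℂ} {ρ : ℝ} (hρ : 1 < ρ) (hζ : ‖ζ‖ ^ 2 = ρ) : ζ ∈ joukowskiDomain :=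
    Or.inl ((one_lt_sq_iff₀ (norm_nonneg ζ)).1 (hζ ▸ hρ))
  ext ζ
  refine ⟨fun ⟨hζ, hsol⟩ ↦ ?_, ?_⟩
  · have hphase : ζ / conj ζ ∈ Metric.sphere 0 1 :=
      mem_sphere_zero_iff_norm.2 (norm_div_conj (ne_zero_of_mem_joukowskiDomain hζ))
    rcases (joukowski_mem_chebyshevLensSolutions_iff hq hζ).1 hsol with ⟨hx, hy⟩ | ⟨hx, hy⟩ <;>
      rcases hζ with hζ | ⟨hζ, him⟩
    · exact Or.inr (Or.inl ⟨eq_of_mem_blaschkeLevel_one_lt hq (by simp) hρ₂ hlevel₂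
        (one_lt_pow₀ hζ two_ne_zero) hx, hy, hphase⟩)
    · exact Or.inr (Or.inr ⟨⟨by rw [hζ, one_pow], hy, hphase⟩, him⟩)
    · exact Or.inl ⟨eq_of_mem_blaschkeLevel_one_lt hq (by simp) hρ₁ hlevel₁
        (one_lt_pow₀ hζ two_ne_zero) hx, hy, hphase⟩
    · rw [hζ, one_pow] at hx
      exact absurd hx (notMem_blaschkeLevel_neg_one_of_mem_one (by simpa using hq)
        (by simpa using one_mem_blaschkeLevel_one))
  · rintro (⟨hx, hy⟩ | ⟨hx, hy⟩ | ⟨⟨hx, hy⟩, him⟩)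
    · have hζ := mem_domain hρ₁ hx
      exact ⟨hζ, (joukowski_mem_chebyshevLensSolutions_iff hq hζ).2 (Or.inr ⟨hx ▸ hlevel₁, hy.1⟩)⟩
    · have hζ := mem_domain hρ₂ hx
      exact ⟨hζ, (joukowski_mem_chebyshevLensSolutions_iff hq hζ).2 (Or.inl ⟨hx ▸ hlevel₂, hy.1⟩)⟩
    · have hζ : ζ ∈ joukowskiDomain :=
        Or.inr ⟨(pow_eq_one_iff_of_nonneg (norm_nonneg ζ) two_ne_zero).1 hx, him⟩
      refine ⟨hζ, (joukowski_mem_chebyshevLensSolutions_iff hq hζ).2 (Or.inl ⟨?_, hy.1⟩)⟩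
      simpa [hx] using one_mem_blaschkeLevel_one

theorem encard_chebyshevLensSolutions (hq : 1 < q) (hqN : 2 < (q - 1) * N) :
    (chebyshevLensSolutions N q).encard = (5 * N - 1 : ℕ) := by
  obtain ⟨ρ₁, hρ₁, hlevel₁⟩ := exists_mem_blaschkeLevel_neg_one N hq
  obtain ⟨ρ₂, hρ₂, hlevel₂⟩ := exists_mem_blaschkeLevel_one hq hqN
  have hρ : ρ₁ ≠ ρ₂ := fun h ↦
    notMem_blaschkeLevel_neg_one_of_mem_one (by nlinarith) hlevel₂ (h ▸ hlevel₁)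
  have hcircle₁ : (blaschkeLevel N q (-1) ∩ Metric.sphere 0 1).encard = N :=
    encard_blaschkeLevel_inter_sphere hq (by simp) hlevel₁ (one_lt_norm_ofReal hρ₁)
  have hcircle₂ : (blaschkeLevel N q 1 ∩ Metric.sphere 0 1).encard = N :=
    encard_blaschkeLevel_inter_sphere hq (by simp) hlevel₂ (one_lt_norm_ofReal hρ₂)
  have hone : 1 ∈ blaschkeLevel N q 1 ∩ Metric.sphere 0 1 := ⟨one_mem_blaschkeLevel_one, by simp⟩
  have hN : 1 ≤ N := Nat.one_le_iff_ne_zero.2 (by rintro rfl; norm_num at hqN)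
  rw [chebyshevLensSolutions_eq_image_joukowski hq hqN.ne',
    (injOn_joukowski.mono (Set.sep_subset _ _)).encard_image,
    joukowski_preimage_chebyshevLensSolutions hq hρ₁ hlevel₁ hρ₂ hlevel₂,
    Set.encard_union_eq, Set.encard_union_eq,
    encard_polarFiber (one_pos.trans hρ₁) Set.inter_subset_right,
    encard_polarFiber (one_pos.trans hρ₂) Set.inter_subset_right,
    encard_polarFiber_one_im_pos Set.inter_subset_right,
    Set.encard_sdiff_singleton_of_mem hone, hcircle₁, hcircle₂]
  · norm_cast
    omega
  · exact (disjoint_polarFiber hρ₂.ne' _ _).mono_right (Set.sep_subset _ _)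
  · exact Set.disjoint_union_right.2 ⟨disjoint_polarFiber hρ _ _,
      (disjoint_polarFiber hρ₁.ne' _ _).mono_right (Set.sep_subset _ _)⟩

end ChebyshevLensSolutions

theorem lensSolutions_I_mul {N : ℕ} (γ : ℝ) (ε : Fin N → ℝ) (z : Fin N → ℂ) :
    lensSolutions N γ ε (fun j ↦ Complex.I * z j) =
      (fun w ↦ Complex.I * w) '' lensSolutions N (-γ) ε z := by
  ext w
  obtain ⟨v, rfl⟩ : ∃ v, Complex.I * v = w := ⟨-Complex.I * w, by simp [← mul_assoc]⟩
  have hI := mul_right_injective₀ Complex.I_ne_zero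
  have hsum : ∑ j, (ε j : ℂ) / (Complex.I * v - Complex.I * z j) =
      -Complex.I * ∑ j, (ε j : ℂ) / (v - z j) := by
    simp only [← mul_sub, Finset.mul_sum, ← div_div, Complex.div_I]
    exact Finset.sum_congr rfl fun j _ ↦ by ring
  rw [hI.mem_set_image]
  refine and_congr (forall_congr' fun j ↦ hI.ne_iff) ?_
  rw [hsum, map_mul, Complex.conj_I]
  refine Iff.trans ?_ (mul_right_inj' (neg_ne_zero.2 Complex.I_ne_zero))
  push_cast
  constructor <;> intro h <;> linear_combination h

end ChebyshevLens

open ChebyshevLens in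
theorem stmt_16_general (N : ℕ) {γ : ℝ} (hγ : 0 < γ) (hγN : (N + 2) * γ < N) :
    ∃ (ε : Fin N → ℝ) (z : Fin N → ℂ),
      (∀ j, 0 < ε j) ∧ Function.Injective z ∧
      (lensSolutions N γ ε z).Finite ∧
      (lensSolutions N γ ε z).ncard = 5 * N - 1 := by
  have hγ1 : γ < 1 := by nlinarith
  have hq : 1 < γ⁻¹ := (one_lt_inv₀ hγ).2 hγ1
  have hqN : 2 < (γ⁻¹ - 1) * N := by
    field_simp
    linarith
  have hI := mul_right_injective₀ Complex.I_ne_zero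
  have hcount : (lensSolutions N γ (chebyshevMass N γ⁻¹)
      fun j ↦ Complex.I * chebyshevNode N j).encard = (5 * N - 1 : ℕ) := by
    rw [lensSolutions_I_mul, hI.encard_image, ← encard_chebyshevLensSolutions hq hqN,
      chebyshevLensSolutions, inv_inv]
  exact ⟨chebyshevMass N γ⁻¹, fun j ↦ Complex.I * chebyshevNode N j,
    chebyshevMass_pos hq, hI.comp (Complex.ofReal_injective.comp chebyshevNode_injective),
    Set.finite_of_encard_eq_coe hcount, by rw [Set.ncard, hcount, ENat.toNat_natCast]⟩

/-- For every `N ≥ 1` there exist a shear `0 < γ < 1`, positive masses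
`ε_j` and distinct positions `z_j` such that the lensing equation
`conj z = −γ·z + Σ_j ε_j/(z − z_j)` has exactly `5N − 1` solutions. -/
theorem stmt_16 (N : ℕ) (hN : 1 ≤ N) :
    ∃ (γ : ℝ) (ε : Fin N → ℝ) (z : Fin N → ℂ),
      0 < γ ∧ γ < 1 ∧
      (∀ j, 0 < ε j) ∧ Function.Injective z ∧
      (lensSolutions N γ ε z).Finite ∧
      (lensSolutions N γ ε z).ncard = 5 * N - 1 := by
  have hN' : (1 : ℝ) ≤ N := by exact_mod_cast hN
  obtain ⟨ε, z, h⟩ := stmt_16_general N (γ := 1 / 4) (by norm_num) (by linarith)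
  exact ⟨1 / 4, ε, z, by norm_num, by norm_num, h⟩
end

section
/- (Rational analogue of the Crofoot–Sarason conjecture) For every integer d ≥ 2 there exist coprime polynomials p, q ∈ ℂ[z] with max(deg p, deg q) = d (so r = p/q is a rational function of degree d) and 2d − 2 distinct points c₁, …, c_{2d−2} ∈ ℂ such that for each j: q(c_j) ≠ 0, p′(c_j)·q(c_j) − p(c_j)·q′(c_j) = 0 (i.e. r′(c_j) = 0), and p(c_j) = conj(c_j)·q(c_j) (i.e. r(c_j) = conj(c_j)). -/
open Polynomial

/-!
For `n ≥ 3` the points are the vertices of an `n`-gonal prism on the Riemann sphere: the `n`-th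
roots of `xⁿ` and of `x⁻ⁿ` for some `x > 1`. Commuting with the rotations of order `n` and with
`z ↦ 1 / conj z` suggests `r z = (zⁿ + t) / (z (t zⁿ + 1))` with `t` real, of degree `n + 1`. With
`x = exp s`, eliminating `t` from `r c = conj c` and `r' c = 0` leaves the single equation
`sinh (n s) = n sinh (2 s)`, which has a positive solution by the intermediate value theorem.

That equation has no positive solution for `n = 1, 2`. Degrees `2` and `3` come from
`r z = (n + 1) zⁿ / (n zⁿ⁺¹ + 1)`, whose critical points are the roots of unity of order `n + 1`,
together with `0` when `n ≥ 2`; the latter is a simple critical point only for `n = 2`.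
-/

namespace AntiRational

/-- `c` is a critical fixed point of `z ↦ conj (p z / q z)`, with denominators cleared from
`r' c = 0` and `r c = conj c`. -/
def IsCriticalFixedPoint (p q : ℂ[X]) (c : ℂ) : Prop :=
  q.eval c ≠ 0 ∧
    (derivative p).eval c * q.eval c - p.eval c * (derivative q).eval c = 0 ∧
    p.eval c = (starRingEnd ℂ) c * q.eval c

/-- The map `z ↦ conj (p z / q z)` is critically fixed of degree `d`: it has `2 * d - 2` critical
fixed points, which is the number of critical points of a rational function of degree `d`. The
degree is required to be attained by the denominator, so that `∞` is not a pole. -/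
structure IsCriticallyFixed (d : ℕ) (p q : ℂ[X]) : Prop where
  isCoprime : IsCoprime p q
  natDegree_num_le : p.natDegree ≤ d
  natDegree_den : q.natDegree = d
  exists_finset : ∃ s : Finset ℂ, s.card = 2 * d - 2 ∧ ∀ c ∈ s, IsCriticalFixedPoint p q c

lemma isCriticalFixedPoint_of_isCoprime {p q : ℂ[X]} {c : ℂ} (hpq : IsCoprime p q)
    (hcrit : (derivative p * q - p * derivative q).eval c = 0)
    (hfix : p.eval c = (starRingEnd ℂ) c * q.eval c) : IsCriticalFixedPoint p q c := by
  refine ⟨fun hq ↦ ?_, by simpa using hcrit, hfix⟩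
  have hp : p.eval c = 0 := by rw [hfix, hq, mul_zero]
  simpa [hp, hq] using aeval_ne_zero_of_isCoprime hpq c

lemma isCoprime_of_isUnit_left {R : Type*} [CommSemiring R] {x : R} (hx : IsUnit x) (y : R) :
    IsCoprime x y := by
  obtain ⟨a, ha⟩ := hx.exists_left_inv
  exact ⟨a, 0, by rw [ha, zero_mul, add_zero]⟩

lemma card_nthRootsFinset_of_ne_zero {n : ℕ} (hn : n ≠ 0) {a : ℂ} (ha : a ≠ 0) :
    (nthRootsFinset n a).card = n := by
  classical
  have hprim := Complex.isPrimitiveRoot_exp n hn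
  rw [nthRootsFinset_def, Multiset.toFinset_card_of_nodup (hprim.nthRoots_nodup ha),
    hprim.card_nthRoots, if_pos (IsAlgClosed.exists_pow_nat_eq a (Nat.pos_of_ne_zero hn))]

section Polygon

variable (R : Type*) [CommRing R] {K : Type*} [Field K]

/-- Numerator of `(n + 1) zⁿ / (n zⁿ⁺¹ + 1)`, the family whose critical fixed points contain the
regular `(n + 1)`-gon; it settles degrees `2` and `3`. -/
noncomputable def polygonNum (n : ℕ) : R[X] := C (n + 1 : R) * X ^ n

/-- Denominator of `(n + 1) zⁿ / (n zⁿ⁺¹ + 1)`, the counterpart of `polygonNum`. -/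
noncomputable def polygonDen (n : ℕ) : R[X] := C (n : R) * X ^ (n + 1) + 1

variable {R}

lemma isCoprime_polygon [CharZero K] (n : ℕ) : IsCoprime (polygonNum K n) (polygonDen K n) := by
  have hunit : IsUnit (C (n + 1 : K)) := isUnit_C.mpr n.cast_add_one_ne_zero.isUnit
  rw [polygonNum, polygonDen, isCoprime_mul_unit_left_left hunit]
  exact ⟨-C (n : K) * X, 1, by ring⟩

lemma natDegree_polygonNum_le (n : ℕ) : (polygonNum R n).natDegree ≤ n :=
  natDegree_C_mul_X_pow_le _ _

lemma natDegree_polygonDen [CharZero R] {n : ℕ} (hn : n ≠ 0) :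
    (polygonDen R n).natDegree = n + 1 := by
  unfold polygonDen
  compute_degree!

lemma derivNumerator_polygon (n : ℕ) :
    derivative (polygonNum R n) * polygonDen R n - polygonNum R n * derivative (polygonDen R n) =
      C ((n + 1) * n : R) * X ^ (n - 1) * (1 - X ^ (n + 1)) := by
  rcases n with _ | n
  · simp [polygonNum, polygonDen]
  · simp only [polygonNum, polygonDen, derivative_C_mul_X_pow, derivative_add, derivative_one,
      add_tsub_cancel_right, C_mul]
    push_cast
    simp only [map_add, map_one, map_natCast]
    ring

lemma isCriticalFixedPoint_polygon_of_pow_eq_one {n : ℕ} {c : ℂ} (hc : c ^ (n + 1) = 1) :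
    IsCriticalFixedPoint (polygonNum ℂ n) (polygonDen ℂ n) c := by
  refine isCriticalFixedPoint_of_isCoprime (isCoprime_polygon n) ?_ ?_
  · simp [derivNumerator_polygon, hc]
  · have hconj : (starRingEnd ℂ) c * c = 1 := by
      rw [Complex.conj_mul', Complex.norm_eq_one_of_pow_eq_one hc n.succ_ne_zero]
      simp
    have hconj_pow : (starRingEnd ℂ) c = c ^ n := by
      linear_combination c ^ n * hconj - (starRingEnd ℂ) c * hc
    simp only [polygonNum, polygonDen, eval_mul, eval_add, eval_C, eval_pow, eval_X, eval_one,
      hc, hconj_pow]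
    ring

lemma isCriticalFixedPoint_polygon_zero {n : ℕ} (hn : 2 ≤ n) :
    IsCriticalFixedPoint (polygonNum ℂ n) (polygonDen ℂ n) 0 := by
  refine isCriticalFixedPoint_of_isCoprime (isCoprime_polygon n) ?_ ?_
  · simp [derivNumerator_polygon, show n - 1 ≠ 0 by omega]
  · simp [polygonNum, show n ≠ 0 by omega]

lemma isCriticallyFixed_polygon_one : IsCriticallyFixed 2 (polygonNum ℂ 1) (polygonDen ℂ 1) where
  isCoprime := isCoprime_polygon 1
  natDegree_num_le := (natDegree_polygonNum_le 1).trans one_le_two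
  natDegree_den := natDegree_polygonDen one_ne_zero
  exists_finset := ⟨nthRootsFinset 2 1, card_nthRootsFinset_of_ne_zero two_ne_zero one_ne_zero,
    fun _ hc ↦ isCriticalFixedPoint_polygon_of_pow_eq_one
      ((mem_nthRootsFinset two_pos 1).mp hc)⟩

lemma isCriticallyFixed_polygon_two : IsCriticallyFixed 3 (polygonNum ℂ 2) (polygonDen ℂ 2) where
  isCoprime := isCoprime_polygon 2
  natDegree_num_le := (natDegree_polygonNum_le 2).trans (Nat.le_succ 2)
  natDegree_den := natDegree_polygonDen two_ne_zero
  exists_finset := by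
    have hzero : (0 : ℂ) ∉ nthRootsFinset 3 1 := by simp [mem_nthRootsFinset]
    refine ⟨insert 0 (nthRootsFinset 3 1), ?_, fun c hc ↦ ?_⟩
    · rw [Finset.card_insert_of_notMem hzero,
        card_nthRootsFinset_of_ne_zero three_ne_zero one_ne_zero]
    · rcases Finset.mem_insert.mp hc with rfl | hroot
      · exact isCriticalFixedPoint_polygon_zero le_rfl
      · exact isCriticalFixedPoint_polygon_of_pow_eq_one
          ((mem_nthRootsFinset three_pos 1).mp hroot)

end Polygon

section Prism

variable {R : Type*} [CommRing R] {K : Type*} [Field K] {n : ℕ}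

/-- Numerator of `(zⁿ + t) / (z (t zⁿ + 1))`, the family with the symmetries of an `n`-gonal prism;
it settles degrees `n + 1 ≥ 4`. -/
noncomputable def prismNum (n : ℕ) (t : R) : R[X] := X ^ n + C t

/-- Denominator of `(zⁿ + t) / (z (t zⁿ + 1))`, the counterpart of `prismNum`. -/
noncomputable def prismDen (n : ℕ) (t : R) : R[X] := X * (C t * X ^ n + 1)

lemma isCoprime_prism {t : K} (hn : n ≠ 0) (ht₀ : t ≠ 0) (ht₁ : t ^ 2 ≠ 1) :
    IsCoprime (prismNum n t) (prismDen n t) := by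
  have hX : IsCoprime (prismNum n t) X := by
    have hC : IsCoprime (C t) X := isCoprime_of_isUnit_left (isUnit_C.mpr ht₀.isUnit) X
    obtain ⟨m, rfl⟩ := Nat.exists_eq_succ_of_ne_zero hn
    simpa [prismNum, pow_succ, add_comm] using hC.add_mul_right_left (X ^ m)
  have hcofactor : IsCoprime (prismNum n t) (C t * X ^ n + 1) := by
    have hC : IsCoprime (prismNum n t) (C (1 - t ^ 2)) :=
      (isCoprime_of_isUnit_left (isUnit_C.mpr (sub_ne_zero.mpr ht₁.symm).isUnit) _).symm
    have hsplit : C t * X ^ n + 1 = C (1 - t ^ 2) + C t * prismNum n t := by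
      simp only [prismNum, C_sub, C_pow, C_1]
      ring
    exact hsplit ▸ hC.add_mul_right_right (C t)
  exact hX.mul_right hcofactor

lemma natDegree_prismNum_le (t : R) : (prismNum n t).natDegree ≤ n := by
  unfold prismNum
  compute_degree!

lemma natDegree_prismDen {t : R} (hn : n ≠ 0) (ht : t ≠ 0) :
    (prismDen n t).natDegree = n + 1 := by
  have hexpand : prismDen n t = C t * X ^ (n + 1) + X := by
    rw [prismDen]
    ring
  rw [hexpand]
  compute_degree!
  simpa [hn] using ht

lemma derivNumerator_prism (t : R) :
    derivative (prismNum n t) * prismDen n t - prismNum n t * derivative (prismDen n t) =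
      C (n - 1 - (n + 1) * t ^ 2) * X ^ n - C t * ((X ^ n) ^ 2 + 1) := by
  rcases n with _ | n
  · simp only [prismNum, prismDen, pow_zero, mul_one, derivative_mul, derivative_C, derivative_X,
      derivative_one, Nat.cast_zero, map_sub, map_mul, map_add, map_pow, map_one,
      map_zero]
    ring
  · simp only [prismNum, prismDen, derivative_add, derivative_mul, derivative_C, derivative_X,
      derivative_X_pow, derivative_one, add_tsub_cancel_right]
    push_cast
    simp only [map_add, map_sub, map_mul, map_pow, map_one, map_natCast]
    ring

lemma isCriticalFixedPoint_prism {t c : ℂ} (hn : n ≠ 0) (ht₀ : t ≠ 0) (ht₁ : t ^ 2 ≠ 1)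
    (hcrit : t * ((c ^ n) ^ 2 + 1) = (n - 1 - (n + 1) * t ^ 2) * c ^ n)
    (hfix : (‖c‖ : ℂ) ^ 2 * (t * c ^ n + 1) = c ^ n + t) :
    IsCriticalFixedPoint (prismNum n t) (prismDen n t) c := by
  refine isCriticalFixedPoint_of_isCoprime (isCoprime_prism hn ht₀ ht₁) ?_ ?_
  · simp only [derivNumerator_prism, eval_sub, eval_add, eval_mul, eval_pow, eval_C, eval_X,
      eval_one]
    linear_combination -hcrit
  · simp only [prismNum, prismDen, eval_add, eval_mul, eval_pow, eval_C, eval_X, eval_one]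
    rw [← mul_assoc, Complex.conj_mul', hfix]

/-- Real parameters `t`, `x` for which every `c` with `cⁿ = xⁿ` is a critical fixed point of
`z ↦ conj ((zⁿ + t) / (z (t zⁿ + 1)))`: `critical` says `r' c = 0`, and `fixed` says
`r c = conj c`. -/
structure IsPrismRadius (n : ℕ) (t x : ℝ) : Prop where
  pos : 0 < x
  critical : t * ((x ^ n) ^ 2 + 1) = (n - 1 - (n + 1) * t ^ 2) * x ^ n
  fixed : x ^ 2 * (t * x ^ n + 1) = x ^ n + t

lemma IsPrismRadius.inv {t x : ℝ} (h : IsPrismRadius n t x) : IsPrismRadius n t x⁻¹ where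
  pos := inv_pos.mpr h.pos
  critical := by
    have hpow := (pow_pos h.pos n).ne'
    rw [inv_pow]
    field_simp
    linear_combination h.critical
  fixed := by
    have hx := h.pos.ne'
    have hpow := (pow_pos h.pos n).ne'
    rw [inv_pow, inv_pow]
    field_simp
    linear_combination -h.fixed

lemma IsPrismRadius.isCriticalFixedPoint {t x : ℝ} (h : IsPrismRadius n t x) (hn : n ≠ 0)
    (ht₀ : 0 < t) (ht₁ : t < 1) {c : ℂ} (hc : c ^ n = ((x ^ n : ℝ) : ℂ)) :
    IsCriticalFixedPoint (prismNum n (t : ℂ)) (prismDen n (t : ℂ)) c := by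
  have hnorm : ‖c‖ = x := by
    refine (pow_left_inj₀ (norm_nonneg c) h.pos.le hn).mp ?_
    rw [← norm_pow, hc, Complex.norm_of_nonneg (pow_pos h.pos n).le]
  have ht_sq : t ^ 2 ≠ 1 := (pow_lt_one₀ ht₀.le ht₁ two_ne_zero).ne
  refine isCriticalFixedPoint_prism hn (mod_cast ht₀.ne') (mod_cast ht_sq) ?_ ?_
  · rw [hc]
    exact_mod_cast h.critical
  · rw [hc, hnorm]
    exact_mod_cast h.fixed

lemma IsPrismRadius.isCriticallyFixed {t x : ℝ} (h : IsPrismRadius n t x) (hn : n ≠ 0)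
    (hx : 1 < x) (ht₀ : 0 < t) (ht₁ : t < 1) :
    IsCriticallyFixed (n + 1) (prismNum n (t : ℂ)) (prismDen n (t : ℂ)) where
  isCoprime := isCoprime_prism hn (mod_cast ht₀.ne')
    (mod_cast (pow_lt_one₀ ht₀.le ht₁ two_ne_zero).ne)
  natDegree_num_le := (natDegree_prismNum_le _).trans n.le_succ
  natDegree_den := natDegree_prismDen hn (mod_cast ht₀.ne')
  exists_finset := by
    have hmem (y : ℝ) {c : ℂ} : c ∈ nthRootsFinset n ((y ^ n : ℝ) : ℂ) ↔ c ^ n = (y ^ n : ℝ) :=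
      mem_nthRootsFinset (Nat.pos_of_ne_zero hn) _
    have hcard {y : ℝ} (hy : 0 < y) : (nthRootsFinset n ((y ^ n : ℝ) : ℂ)).card = n :=
      card_nthRootsFinset_of_ne_zero hn (mod_cast (pow_pos hy n).ne')
    have hpow_lt : x⁻¹ ^ n < x ^ n :=
      pow_lt_pow_left₀ ((inv_lt_one_of_one_lt₀ hx).trans hx) h.inv.pos.le hn
    have hdisj : Disjoint (nthRootsFinset n ((x ^ n : ℝ) : ℂ))
        (nthRootsFinset n ((x⁻¹ ^ n : ℝ) : ℂ)) :=
      Finset.disjoint_left.mpr fun c hc hc' ↦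
        hpow_lt.ne' (Complex.ofReal_injective (((hmem x).mp hc).symm.trans ((hmem x⁻¹).mp hc')))
    refine ⟨_, (Finset.card_disjUnion _ _ hdisj).trans ?_, fun c hc ↦ ?_⟩
    · rw [hcard h.pos, hcard h.inv.pos]
      omega
    · rcases Finset.mem_disjUnion.mp hc with hc | hc
      · exact h.isCriticalFixedPoint hn ht₀ ht₁ ((hmem x).mp hc)
      · exact h.inv.isCriticalFixedPoint hn ht₀ ht₁ ((hmem x⁻¹).mp hc)

end Prism

section PrismParameters

open Real

lemma exp_mul_sinh_le_sinh_add {u : ℝ} (hu : 0 ≤ u) (v : ℝ) :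
    exp u * sinh v ≤ sinh (u + v) :=
  calc exp u * sinh v = sinh u * sinh v + cosh u * sinh v := by rw [← cosh_add_sinh]; ring
    _ ≤ sinh u * cosh v + cosh u * sinh v := by
      gcongr
      exact (sinh_lt_cosh v).le
    _ = sinh (u + v) := (sinh_add u v).symm

lemma exists_sinh_mul_eq {a : ℝ} (ha : 2 < a) :
    ∃ s, 0 < s ∧ sinh (a * s) = a * sinh (2 * s) := by
  have ha₀ : 0 < a := two_pos.trans ha
  have hlow : sinh (a * a⁻¹) ≤ a * sinh (2 * a⁻¹) :=
    calc sinh (a * a⁻¹) = (exp 1 - exp (-1)) / 2 := by rw [mul_inv_cancel₀ ha₀.ne', sinh_eq]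
      _ ≤ 2 := by linarith [exp_one_lt_three, exp_pos (-1)]
      _ = a * (2 * a⁻¹) := by field_simp
      _ ≤ a * sinh (2 * a⁻¹) := by
        gcongr
        exact self_le_sinh_iff.mpr (by positivity)
  let b := (a - 1) / (a - 2)
  have hb : 1 ≤ b := (one_le_div (by linarith)).mpr (by linarith)
  have hmul : (a - 2) * b = a - 1 := mul_div_cancel₀ _ (by linarith)
  have hhigh : a * sinh (2 * b) ≤ sinh (a * b) :=
    calc a * sinh (2 * b) ≤ exp ((a - 2) * b) * sinh (2 * b) := by
          gcongr
          linarith [add_one_le_exp ((a - 2) * b)]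
      _ ≤ sinh ((a - 2) * b + 2 * b) := exp_mul_sinh_le_sinh_add (by linarith) _
      _ = sinh (a * b) := by ring_nf
  have hab : a⁻¹ ≤ b := (inv_le_one_of_one_le₀ (by linarith)).trans hb
  obtain ⟨s, hs, hs_eq⟩ := isPreconnected_Icc.intermediate_value₂
    (Set.left_mem_Icc.mpr hab) (Set.right_mem_Icc.mpr hab)
    (f := fun s ↦ sinh (a * s)) (g := fun s ↦ a * sinh (2 * s))
    (by fun_prop) (by fun_prop) hlow hhigh
  exact ⟨s, (inv_pos.mpr ha₀).trans_le hs.1, hs_eq⟩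

lemma exists_one_lt_radius_eq {n : ℕ} (hn : 3 ≤ n) :
    ∃ x : ℝ, 1 < x ∧ x ^ 2 * ((x ^ n) ^ 2 - 1) = n * x ^ n * ((x ^ 2) ^ 2 - 1) := by
  obtain ⟨s, hs, hsinh⟩ := exists_sinh_mul_eq (a := n) (mod_cast hn)
  refine ⟨exp s, one_lt_exp_iff.mpr hs, ?_⟩
  rw [sinh_eq, sinh_eq, exp_neg, exp_neg, exp_nat_mul, ← Nat.cast_ofNat, exp_nat_mul] at hsinh
  have hexp := exp_ne_zero s
  field_simp at hsinh
  linear_combination hsinh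

lemma prism_critical_of_fixed {K : Type*} [Field K] {a t u w : K} (huw : u * w - 1 ≠ 0)
    (ht : t * (u * w - 1) = w - u) (h : u * (w ^ 2 - 1) = a * w * (u ^ 2 - 1)) :
    t * (w ^ 2 + 1) = (a - 1 - (a + 1) * t ^ 2) * w := by
  refine mul_right_cancel₀ (pow_ne_zero 2 huw) ?_
  linear_combination
    ((w ^ 2 + 1) * (u * w - 1) + (a + 1) * w * (t * (u * w - 1) + (w - u))) * ht +
      (w ^ 2 - 1) * h

lemma exists_isPrismRadius {n : ℕ} (hn : 3 ≤ n) :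
    ∃ t x : ℝ, 1 < x ∧ 0 < t ∧ t < 1 ∧ IsPrismRadius n t x := by
  obtain ⟨x, hx, hxn⟩ := exists_one_lt_radius_eq hn
  have hsq : 1 < x ^ 2 := one_lt_pow₀ hx two_ne_zero
  have hpow : x ^ 2 < x ^ n := pow_lt_pow_right₀ hx hn
  have hden : 0 < x ^ 2 * x ^ n - 1 := by nlinarith
  let t := (x ^ n - x ^ 2) / (x ^ 2 * x ^ n - 1)
  have ht_mul : t * (x ^ 2 * x ^ n - 1) = x ^ n - x ^ 2 := div_mul_cancel₀ _ hden.ne'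
  refine ⟨t, x, hx, div_pos (sub_pos.mpr hpow) hden, (div_lt_one hden).mpr (by nlinarith), ?_⟩
  exact {
    pos := zero_lt_one.trans hx
    critical := prism_critical_of_fixed hden.ne' ht_mul hxn
    fixed := by linear_combination ht_mul }

end PrismParameters

theorem exists_isCriticallyFixed {d : ℕ} (hd : 2 ≤ d) : ∃ p q, IsCriticallyFixed d p q := by
  obtain rfl | rfl | hd' : d = 2 ∨ d = 3 ∨ 4 ≤ d := by omega
  · exact ⟨_, _, isCriticallyFixed_polygon_one⟩
  · exact ⟨_, _, isCriticallyFixed_polygon_two⟩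
  · obtain ⟨n, rfl⟩ : ∃ n, d = n + 1 := ⟨d - 1, by omega⟩
    obtain ⟨t, x, hx, ht₀, ht₁, hradius⟩ := exists_isPrismRadius (n := n) (by omega)
    exact ⟨_, _, hradius.isCriticallyFixed (by omega) hx ht₀ ht₁⟩

end AntiRational

/-- Rational analogue of the Crofoot–Sarason conjecture: For every
`d ≥ 2` there is a rational function `r = p/q` of degree `d` with `2d − 2` distinct
finite critical fixed points of `z ↦ conj(r(z))`: points `c` with `q(c) ≠ 0`,
`r′(c) = 0` and `r(c) = conj c`. -/
theorem stmt_17 (d : ℕ) (hd : 2 ≤ d) :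
    ∃ (p q : Polynomial ℂ), q ≠ 0 ∧ IsCoprime p q ∧
      max p.natDegree q.natDegree = d ∧
      ∃ c : Fin (2 * d - 2) → ℂ, Function.Injective c ∧
        ∀ j, q.eval (c j) ≠ 0 ∧
          (derivative p).eval (c j) * q.eval (c j) -
            p.eval (c j) * (derivative q).eval (c j) = 0 ∧
          p.eval (c j) = (starRingEnd ℂ) (c j) * q.eval (c j) := by
  obtain ⟨p, q, h⟩ := AntiRational.exists_isCriticallyFixed hd
  obtain ⟨s, hcard, hs⟩ := h.exists_finset
  have hq : q ≠ 0 := ne_zero_of_natDegree_gt (n := 0) (by rw [h.natDegree_den]; omega)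
  have hdegree : max p.natDegree q.natDegree = d := by
    rw [h.natDegree_den, max_eq_right h.natDegree_num_le]
  let e := s.equivFinOfCardEq hcard
  exact ⟨p, q, hq, h.isCoprime, hdegree, fun j ↦ e.symm j,
    Subtype.val_injective.comp e.symm.injective, fun j ↦ hs _ (e.symm j).2⟩
end

section
/- (Crofoot–Sarason conjecture / Geyer's theorem) For every integer d ≥ 2 there exist a polynomial p ∈ ℂ[z] of degree d and d − 1 distinct points c₁, …, c_{d−1} ∈ ℂ such that p′(c_j) = 0 and p(c_j) = conj(c_j) for all j = 1, …, d − 1. -/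
open Polynomial

/-!
Normalise the critical points to be `0` and the coordinates of `c`, and let `V c` be the tuple of
values at the points `c j` of the polynomial vanishing at `0` with monic derivative
`z ∏ j, (z - c j)`. One looks for a `c` with nonzero, distinct coordinates such that `V c = conj c`.

The map `V` is homogeneous with trivial zero set, hence proper, and it is a local biholomorphism
wherever the critical points are distinct. So it is a covering over the configurations with
distinct points, and `conj` followed by a branch of `V⁻¹` acts on paths of configurations. Let `W`
be the set of configurations bounded by `R` with mutual distances greater than `δ`. For `R` large
and `δ` small, `V⁻¹` maps the closure of `W` into `W`: homogeneity controls the size, and two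
critical points at distance at most `δ` have critical values at distance `O(δ³)`. Hence the lifts
uniformly contract the Kobayashi distance of `W`, here measured by holomorphic maps from thin
neighbourhoods of `[0, 1]`. Iterating them on a path from `conj (V x)` to `x` yields points `y` of a
compact subset of `W` at which `V y` is arbitrarily close to `conj y`.
-/

open Metric Set Filter Topology

section Lifting

theorem isCoveringMapOn_of_isProperMap {X Y : Type*} [TopologicalSpace X] [T2Space X]
    [TopologicalSpace Y] {f : X → Y} {s : Set Y} (hf : IsProperMap f)
    (hs : IsLocalHomeomorphOn f (f ⁻¹' s)) : IsCoveringMapOn f s := by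
  refine hf.isClosedMap.isCoveringMapOn_of_isLocalHomeomorphOn (fun y hy ↦ ?_) hs
  refine (hf.isCompact_preimage isCompact_singleton).finite
    (.of_openPartialHomeomorph _ subset_rfl fun x hx ↦ ?_)
  obtain ⟨φ, hxφ, hfφ⟩ := hs x (mem_preimage.2 (mem_singleton_iff.1 hx ▸ hy))
  exact ⟨φ, hxφ, hfφ.symm⟩

theorem isLocalHomeomorphOn_of_hasStrictFDerivAt {𝕜 E F : Type*} [NontriviallyNormedField 𝕜]
    [NormedAddCommGroup E] [NormedSpace 𝕜 E] [CompleteSpace E] [NormedAddCommGroup F]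
    [NormedSpace 𝕜 F] {f : E → F} {s : Set E}
    (hf : ∀ x ∈ s, ∃ f' : E ≃L[𝕜] F, HasStrictFDerivAt f (f' : E →L[𝕜] F) x) :
    IsLocalHomeomorphOn f s := by
  intro x hx
  obtain ⟨f', hf'⟩ := hf x hx
  exact ⟨hf'.toOpenPartialHomeomorph f, hf'.mem_toOpenPartialHomeomorph_source, rfl⟩

theorem exists_differentiableOn_lift {D E F : Type*} [NormedAddCommGroup D] [NormedSpace ℂ D]
    [NormedAddCommGroup E] [NormedSpace ℂ E] [NormedAddCommGroup F] [NormedSpace ℂ F]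
    {V : E → F} {W : Set F} {U : Set D} {f : D → F} {a : D} {x : E}
    (hV : IsCoveringMapOn V W)
    (hV' : ∀ x ∈ V ⁻¹' W, ∃ V' : E ≃L[ℂ] F, HasStrictFDerivAt V (V' : E →L[ℂ] F) x)
    (hUo : IsOpen U) (hUc : Convex ℝ U) (ha : a ∈ U) (hf : DifferentiableOn ℂ f U)
    (hfW : MapsTo f U W) (hx : V x = f a) :
    ∃ g : D → E, DifferentiableOn ℂ g U ∧ (∀ z ∈ U, V (g z) = f z) ∧ g a = x := by
  have : ContractibleSpace U := hUc.contractibleSpace ⟨a, ha⟩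
  have : LocallyPathConnectedSpace U := hUo.locallyPathConnectedSpace
  obtain ⟨G, ⟨hGa, hVG⟩, -⟩ := hV.existsUnique_continuousMap_lifts (a₀ := ⟨a, ha⟩) (e₀ := x)
    ⟨U.domRestrict f, hf.continuousOn.domRestrict⟩ hx fun z ↦ hfW z.2
  set g : D → E := Function.extend Subtype.val G 0
  have hgG (z : U) : g z = G z := Subtype.val_injective.extend_apply G 0 z
  have hVg (z) (hz : z ∈ U) : V (g z) = f z :=
    (congrArg V (hgG ⟨z, hz⟩)).trans (congrFun hVG ⟨z, hz⟩)
  have hgc : ContinuousOn g U :=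
    continuousOn_iff_continuous_domRestrict.2 (G.continuous.congr fun z ↦ (hgG z).symm)
  refine ⟨g, fun z hz ↦ ?_, hVg, (hgG ⟨a, ha⟩).trans hGa⟩
  have hUz := hUo.mem_nhds hz
  obtain ⟨V', hV'z⟩ := hV' (g z) (mem_preimage.2 (hVg z hz ▸ hfW hz))
  exact (hV'z.hasFDerivAt.of_comp_of_leftInverse (hgc.continuousAt hUz)
    (hf.hasFDerivAt hUz) (eventually_of_mem hUz hVg)
    (f'symm := (V'.symm : F →L[ℂ] E)) V'.symm_apply_apply).differentiableAt.differentiableWithinAt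

end Lifting

section HolomorphicStrips

variable {E : Type*} [NormedAddCommGroup E] [NormedSpace ℂ E]

theorem norm_sub_le_of_mapsTo_thickening {f : ℂ → E} {S : Set ℂ} {ρ R : ℝ} (hρ : 0 < ρ)
    (hS : Convex ℝ S) (hf : DifferentiableOn ℂ f (thickening ρ S))
    (hfR : MapsTo f (thickening ρ S) (closedBall 0 R)) {z w : ℂ} (hz : z ∈ S) (hw : w ∈ S) :
    ‖f z - f w‖ ≤ 2 * R / ρ * ‖z - w‖ := by
  refine hS.norm_image_sub_le_of_norm_deriv_le (𝕜 := ℂ) (fun a ha ↦ ?_) (fun a ha ↦ ?_) hw hz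
  · exact hf.differentiableAt (isOpen_thickening.mem_nhds (self_subset_thickening hρ S ha))
  · have hball : ball a ρ ⊆ thickening ρ S := ball_subset_thickening ha ρ
    refine Complex.norm_deriv_le_div_of_mapsTo_ball (hf.mono hball) (fun b hb ↦ ?_) hρ
    rw [mem_closedBall, two_mul]
    exact (dist_triangle_right _ _ 0).trans
      (add_le_add (hfR (hball hb)) (hfR (hball (mem_ball_self hρ))))

/-- The open `ρ`-neighbourhood of the real interval `[0, 1]` in `ℂ`. It is the domain of the
holomorphic maps used to measure how far apart two points are. -/
def unitStrip (ρ : ℝ) : Set ℂ := thickening ρ (segment ℝ 0 1)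

theorem isOpen_unitStrip {ρ : ℝ} : IsOpen (unitStrip ρ) := isOpen_thickening

theorem convex_unitStrip {ρ : ℝ} : Convex ℝ (unitStrip ρ) := (convex_segment 0 1).thickening ρ

theorem segment_subset_unitStrip {ρ : ℝ} (hρ : 0 < ρ) : segment ℝ 0 1 ⊆ unitStrip ρ :=
  self_subset_thickening hρ _

theorem isCompact_segment_zero_one : IsCompact (segment ℝ (0 : ℂ) 1) :=
  convexHull_pair (𝕜 := ℝ) (0 : ℂ) 1 ▸ (toFinite _).isCompact_convexHull ℝ

theorem ofReal_mem_segment {s : ℝ} (h₀ : 0 ≤ s) (h₁ : s ≤ 1) : (s : ℂ) ∈ segment ℝ (0 : ℂ) 1 :=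
  ⟨1 - s, s, sub_nonneg.2 h₁, h₀, by ring, by simp⟩

theorem star_mem_unitStrip {ρ : ℝ} {z : ℂ} (hz : z ∈ unitStrip ρ) : star z ∈ unitStrip ρ := by
  obtain ⟨t, ht, hzt⟩ := mem_thickening_iff.1 hz
  refine mem_thickening_iff.2 ⟨star t, ?_, ?_⟩
  · obtain ⟨a, b, ha, hb, hab, rfl⟩ := ht
    exact ⟨a, b, ha, hb, hab, by simp⟩
  · rwa [dist_eq_norm, ← star_sub, norm_star, ← dist_eq_norm]

theorem norm_le_of_mem_unitStrip {ρ : ℝ} {z : ℂ} (hz : z ∈ unitStrip ρ) : ‖z‖ ≤ 1 + ρ := by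
  obtain ⟨t, ht, hzt⟩ := mem_thickening_iff.1 hz
  have ht1 : ‖t‖ ≤ 1 := by simpa using norm_sub_le_of_mem_segment ht
  rw [dist_eq_norm] at hzt
  linarith [norm_le_insert' z t]

/-- `StripJoined W ρ s x y` says that some holomorphic map from `unitStrip ρ` to `W` takes the
values `x` at `0` and `y` at `s`. The smaller `s`, the closer `x` and `y` are in the Kobayashi
pseudometric of `W`. -/
def StripJoined (W : Set E) (ρ s : ℝ) (x y : E) : Prop :=
  ∃ f : ℂ → E, DifferentiableOn ℂ f (unitStrip ρ) ∧ MapsTo f (unitStrip ρ) W ∧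
    f 0 = x ∧ f s = y

variable {V : E → E} {W : Set E} {R ρ ε k s : ℝ} {x y x' : E}

theorem StripJoined.left_mem (hρ : 0 < ρ) (h : StripJoined W ρ s x y) : x ∈ W := by
  obtain ⟨f, -, hfW, rfl, -⟩ := h
  exact hfW (segment_subset_unitStrip hρ (left_mem_segment ℝ 0 1))

theorem StripJoined.norm_sub_le (hρ : 0 < ρ) (hWR : W ⊆ closedBall 0 R) (hs₀ : 0 ≤ s)
    (hs₁ : s ≤ 1) (h : StripJoined W ρ s x y) : ‖y - x‖ ≤ 2 * R / ρ * s := by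
  obtain ⟨f, hf, hfW, rfl, rfl⟩ := h
  simpa [abs_of_nonneg hs₀] using norm_sub_le_of_mapsTo_thickening hρ (convex_segment 0 1) hf
    (hfW.mono_right hWR) (ofReal_mem_segment hs₀ hs₁) (left_mem_segment ℝ 0 1)

/-- If a map sends the strip into `W` with room `ε` to spare, a small linear perturbation makes it
reach its value at `s` already at `k * s`. -/
theorem stripJoined_mul_of_thickening_subset {A : Set E} (hρ : 0 < ρ)
    (hA : A ⊆ closedBall 0 R) (hAW : thickening ε A ⊆ W) (hk₀ : 0 < k) (hk₁ : k < 1)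
    (hk : (1 + ρ) * (2 * R / ρ) * (1 - k) < ε * k) (hs₀ : 0 < s) (hs₁ : s ≤ 1)
    (h : StripJoined A ρ s x y) : StripJoined W ρ (k * s) x y := by
  obtain ⟨f, hf, hfA, rfl, rfl⟩ := h
  have hks : 0 < k * s := mul_pos hk₀ hs₀
  have hks' : ((k * s : ℝ) : ℂ) ≠ 0 := Complex.ofReal_ne_zero.2 hks.ne'
  set v := f s - f ((k * s : ℝ) : ℂ)
  have hv : ‖v‖ ≤ 2 * R / ρ * (s * (1 - k)) := by
    have hdist : ‖(s : ℂ) - ((k * s : ℝ) : ℂ)‖ = s * (1 - k) := by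
      rw [← Complex.ofReal_sub, Complex.norm_real, Real.norm_of_nonneg (by nlinarith)]
      ring
    rw [← hdist]
    exact norm_sub_le_of_mapsTo_thickening hρ (convex_segment 0 1) hf (hfA.mono_right hA)
      (ofReal_mem_segment hs₀.le hs₁) (ofReal_mem_segment hks.le (by nlinarith))
  refine ⟨fun z ↦ f z + (z / ((k * s : ℝ) : ℂ)) • v, ?_, fun z hz ↦ hAW ?_, ?_, ?_⟩
  · exact hf.add (by fun_prop)
  · refine mem_thickening_iff.2 ⟨f z, hfA hz, ?_⟩
    rw [dist_self_add_left, norm_smul, norm_div, Complex.norm_real, Real.norm_of_nonneg hks.le]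
    calc ‖z‖ / (k * s) * ‖v‖
        ≤ (1 + ρ) / (k * s) * (2 * R / ρ * (s * (1 - k))) := by
          gcongr
          exact norm_le_of_mem_unitStrip hz
      _ = (1 + ρ) * (2 * R / ρ) * (1 - k) / k := by field_simp
      _ < ε := (div_lt_iff₀ hk₀).2 hk
  · simp
  · simp only [v, div_self hks', one_smul, add_sub_cancel]

variable [StarAddMonoid E] [NormedStarGroup E] [StarModule ℂ E]

theorem StripJoined.exists_lift (hρ : 0 < ρ) (hV : IsCoveringMapOn V W)
    (hV' : ∀ x ∈ V ⁻¹' W, ∃ V' : E ≃L[ℂ] E, HasStrictFDerivAt V (V' : E →L[ℂ] E) x)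
    (hstar : ∀ x ∈ W, star x ∈ W) (hs₀ : 0 ≤ s) (hs₁ : s ≤ 1) (h : StripJoined W ρ s x y)
    (hx' : V x' = star x) : ∃ y', V y' = star y ∧ StripJoined (V ⁻¹' W) ρ s x' y' := by
  obtain ⟨f, hf, hfW, rfl, rfl⟩ := h
  have hsub : segment ℝ 0 1 ⊆ unitStrip ρ := segment_subset_unitStrip hρ
  have hconj : DifferentiableOn ℂ (star ∘ f ∘ star) (unitStrip ρ) := fun z hz ↦ by
    have hfz := hf.differentiableAt (isOpen_unitStrip.mem_nhds (star_mem_unitStrip hz))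
    exact (star_star z ▸ hfz.star_star :).differentiableWithinAt
  have hconjW : MapsTo (star ∘ f ∘ star) (unitStrip ρ) W := fun z hz ↦
    hstar _ (hfW (star_mem_unitStrip hz))
  obtain ⟨g, hg, hVg, rfl⟩ := exists_differentiableOn_lift hV hV' isOpen_unitStrip
    convex_unitStrip (hsub (left_mem_segment ℝ 0 1)) hconj hconjW
    (hx'.trans (congrArg (star ∘ f) (star_zero ℂ).symm))
  refine ⟨g s, ?_, g, hg, fun z hz ↦ mem_preimage.2 (hVg z hz ▸ hconjW hz), rfl, rfl⟩
  rw [hVg _ (hsub (ofReal_mem_segment hs₀ hs₁))]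
  exact congrArg (star ∘ f) (Complex.conj_ofReal s)

theorem exists_forall_stripJoined_pow (hρ : 0 < ρ) (hε : 0 < ε) (hV : IsCoveringMapOn V W)
    (hV' : ∀ x ∈ V ⁻¹' W, ∃ V' : E ≃L[ℂ] E, HasStrictFDerivAt V (V' : E →L[ℂ] E) x)
    (hstar : ∀ x ∈ W, star x ∈ W) (hR : 0 ≤ R) (hWR : W ⊆ closedBall 0 R)
    (hVW : thickening ε (V ⁻¹' W) ⊆ W) (h : StripJoined W ρ 1 x y) (hxy : V y = star x) :
    ∃ k : ℝ, 0 < k ∧ k < 1 ∧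
      ∀ n : ℕ, ∃ x y, V y = star x ∧ StripJoined W ρ (k ^ n) x y := by
  set B := (1 + ρ) * (2 * R / ρ)
  have : 0 ≤ B := by positivity
  obtain ⟨k, hBk, hk₁⟩ := exists_between ((div_lt_one (by positivity)).2 (lt_add_of_pos_right B hε))
  have hk₀ : 0 < k := (by positivity : 0 ≤ B / (B + ε)).trans_lt hBk
  have hk : B * (1 - k) < ε * k := by
    rw [div_lt_iff₀ (by positivity)] at hBk
    linarith
  refine ⟨k, hk₀, hk₁, fun n ↦ ?_⟩
  induction n with
  | zero => exact ⟨x, y, hxy, by simpa using h⟩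
  | succ n ih =>
    obtain ⟨x, y, hxy, h⟩ := ih
    have hkn₁ : k ^ n ≤ 1 := pow_le_one₀ hk₀.le hk₁.le
    obtain ⟨y', hyy', h'⟩ := h.exists_lift hρ hV hV' hstar (by positivity) hkn₁ hxy
    exact ⟨y, y', hyy', pow_succ' k n ▸ stripJoined_mul_of_thickening_subset hρ
      (((self_subset_thickening hε _).trans hVW).trans hWR) hVW hk₀ hk₁ hk (by positivity) hkn₁ h'⟩

theorem exists_apply_eq_star [FiniteDimensional ℂ E] {f : ℂ → E} (hV : IsProperMap V)
    (hV' : ∀ x ∈ V ⁻¹' W, ∃ V' : E ≃L[ℂ] E, HasStrictFDerivAt V (V' : E →L[ℂ] E) x)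
    (hWo : IsOpen W) (hWb : Bornology.IsBounded W) (hstar : ∀ x ∈ W, star x ∈ W)
    (hVW : V ⁻¹' closure W ⊆ W) (hf : Differentiable ℂ f) (hfW : MapsTo f (segment ℝ 0 1) W)
    (hVf : V (f 1) = star (f 0)) : ∃ x ∈ W, V x = star x := by
  have : CompleteSpace E := FiniteDimensional.complete ℂ E
  have : ProperSpace E := FiniteDimensional.proper ℂ E
  have hK : IsCompact (V ⁻¹' closure W) := hV.isCompact_preimage hWb.isCompact_closure
  obtain ⟨ε, hε, hεW⟩ := hK.exists_thickening_subset_open hWo hVW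
  obtain ⟨R, hR, hWR⟩ := hWb.subset_closedBall_lt 0 0
  obtain ⟨ρ, hρ, hρW⟩ := isCompact_segment_zero_one.exists_thickening_subset_open
    (hWo.preimage hf.continuous) hfW
  obtain ⟨k, hk₀, hk₁, hkn⟩ := exists_forall_stripJoined_pow hρ hε
    (isCoveringMapOn_of_isProperMap hV (isLocalHomeomorphOn_of_hasStrictFDerivAt hV')) hV' hstar
    hR.le hWR ((thickening_subset_of_subset ε (preimage_mono subset_closure)).trans hεW)
    ⟨f, hf.differentiableOn, hρW, rfl, by simp⟩ hVf
  have happrox (n : ℕ) : ∃ y ∈ V ⁻¹' closure W, ‖V y - star y‖ ≤ 2 * R / ρ * k ^ n := by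
    obtain ⟨x, y, hxy, h⟩ := hkn n
    refine ⟨y, subset_closure (hxy ▸ hstar x (h.left_mem hρ)), ?_⟩
    rw [hxy, ← star_sub, norm_star, norm_sub_rev]
    exact h.norm_sub_le hρ hWR (by positivity) (pow_le_one₀ hk₀.le hk₁.le)
  obtain ⟨y, hy, -⟩ := happrox 0
  obtain ⟨x, hx, hmin⟩ := hK.exists_isMinOn ⟨y, hy⟩ (f := fun x ↦ ‖V x - star x‖)
    (hV.continuous.sub continuous_star).norm.continuousOn
  have hlim : Tendsto (fun n ↦ 2 * R / ρ * k ^ n) atTop (𝓝 0) := by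
    simpa using (tendsto_pow_atTop_nhds_zero_of_lt_one hk₀.le hk₁).const_mul (2 * R / ρ)
  have hzero : ‖V x - star x‖ ≤ 0 := ge_of_tendsto' hlim fun n ↦ by
    obtain ⟨y, hy, hyn⟩ := happrox n
    exact (hmin hy).trans hyn
  exact ⟨x, hVW hx, sub_eq_zero.1 (norm_le_zero_iff.1 hzero)⟩

end HolomorphicStrips
section Primitive

variable {𝕜 : Type*} [Field 𝕜]

/-- The antiderivative of a polynomial that vanishes at `0`. In positive characteristic the terms
without an antiderivative are dropped, since division by zero gives `0`. -/
noncomputable def primitive : 𝕜[X] →ₗ[𝕜] 𝕜[X] :=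
  lsum fun n ↦ (n + 1 : 𝕜)⁻¹ • monomial (n + 1)

theorem primitive_monomial (n : ℕ) (a : 𝕜) :
    primitive (monomial n a) = monomial (n + 1) ((n + 1 : 𝕜)⁻¹ * a) := by
  simp [primitive, lsum_apply, sum_monomial_index, smul_monomial]

theorem eval_zero_primitive (p : 𝕜[X]) : (primitive p).eval 0 = 0 := by
  induction p using Polynomial.induction_on' with
  | add p q hp hq => rw [map_add, eval_add, hp, hq, add_zero]
  | monomial n a => simp [primitive_monomial]

theorem primitive_C_mul (a : 𝕜) (p : 𝕜[X]) : primitive (C a * p) = C a * primitive p := by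
  rw [← smul_eq_C_mul, map_smul, smul_eq_C_mul]

variable [CharZero 𝕜]

theorem derivative_primitive (p : 𝕜[X]) : derivative (primitive p) = p := by
  induction p using Polynomial.induction_on' with
  | add p q hp hq => rw [map_add, derivative_add, hp, hq]
  | monomial n a =>
    have : (n + 1 : 𝕜) ≠ 0 := n.cast_add_one_ne_zero
    rw [primitive_monomial, derivative_monomial, Nat.add_sub_cancel, Nat.cast_add_one]
    congr 1
    field_simp

theorem primitive_derivative {p : 𝕜[X]} (hp : p.eval 0 = 0) : primitive (derivative p) = p := by
  have hconst : derivative (primitive (derivative p) - p) = 0 := by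
    rw [derivative_sub, derivative_primitive, sub_self]
  rw [← sub_eq_zero, eq_C_of_natDegree_eq_zero (derivative_eq_zero.1 hconst),
    coeff_zero_eq_eval_zero, eval_sub, eval_zero_primitive, hp, sub_zero, C_0]

theorem primitive_ne_zero {p : 𝕜[X]} (hp : p ≠ 0) : primitive p ≠ 0 := fun h ↦
  hp (by rw [← derivative_primitive p, h, derivative_zero])

theorem natDegree_primitive {p : 𝕜[X]} (hp : p ≠ 0) :
    (primitive p).natDegree = p.natDegree + 1 := by
  have hpos : (primitive p).natDegree ≠ 0 := fun h ↦
    hp (derivative_primitive p ▸ derivative_eq_zero.2 h)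
  have hsub := natDegree_derivative (primitive p)
  rw [derivative_primitive] at hsub
  omega

theorem primitive_comp_C_mul_X (p : 𝕜[X]) (t : 𝕜) :
    (primitive p).comp (C t * X) = C t * primitive (p.comp (C t * X)) := by
  rw [← primitive_C_mul, ← primitive_derivative (p := (primitive p).comp _)
    (by simp [eval_comp, eval_zero_primitive]), derivative_comp, derivative_primitive,
    derivative_C_mul, derivative_X, mul_one]

theorem X_pow_succ_dvd_primitive {n : ℕ} {p : 𝕜[X]} (h : X ^ n ∣ p) :
    X ^ (n + 1) ∣ primitive p := by
  rw [X_pow_dvd_iff] at h ⊢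
  rintro (_ | k) hk
  · rw [coeff_zero_eq_eval_zero, eval_zero_primitive]
  · have hcoeff := h k (by omega)
    rw [← derivative_primitive p, coeff_derivative] at hcoeff
    exact (mul_eq_zero.1 hcoeff).resolve_right k.cast_add_one_ne_zero

theorem eq_zero_of_eval_primitive_X_mul_eq_zero {ι : Type*} [Fintype ι] {c : ι → 𝕜}
    (hc : Function.Injective c) (hc₀ : ∀ j, c j ≠ 0) {p : 𝕜[X]} (hp : p.degree < Fintype.card ι)
    (h : ∀ j, (primitive (X * p)).eval (c j) = 0) : p = 0 := by
  by_contra hp₀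
  have hXp : X * p ≠ 0 := mul_ne_zero X_ne_zero hp₀
  obtain ⟨q, hq⟩ : X ^ 2 ∣ primitive (X * p) :=
    X_pow_succ_dvd_primitive ((pow_one (X : 𝕜[X])).dvd.trans (dvd_mul_right X p))
  have hq₀ : q ≠ 0 := fun h₀ ↦ primitive_ne_zero hXp (by rw [hq, h₀, mul_zero])
  have hdeg : q.degree = p.degree := by
    have := natDegree_primitive hXp
    rw [hq, natDegree_X_pow_mul _ hq₀, natDegree_X_mul hp₀] at this
    rw [degree_eq_natDegree hq₀, degree_eq_natDegree hp₀]
    congr 1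
    omega
  refine hq₀ (eq_zero_of_degree_lt_of_eval_index_eq_zero Finset.univ hc.injOn
    (hdeg ▸ hp) fun j _ ↦ ?_)
  simpa [hq, hc₀ j] using h j

end Primitive

section Roots

theorem roots_eq_derivative_roots_add_dedup {R : Type*} [CommRing R] [IsDomain R] [CharZero R]
    [DecidableEq R] {p : R[X]}
    (h : ∀ z, (derivative p).IsRoot z → p.IsRoot z) (hp : p ≠ 0) :
    p.roots = (derivative p).roots + p.roots.dedup := by
  ext z
  simp only [Multiset.count_add, count_roots, Multiset.count_dedup, mem_roots hp]
  by_cases hz : p.IsRoot z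
  · have := (rootMultiplicity_pos hp).2 hz
    rw [if_pos hz, derivative_rootMultiplicity_of_root hz]
    omega
  · rw [if_neg hz, rootMultiplicity_eq_zero hz, rootMultiplicity_eq_zero (hz ∘ h z)]

theorem eq_of_isRoot_of_derivative_isRoot_imp {K : Type*} [Field K] [IsAlgClosed K] [CharZero K]
    {p : K[X]} (h : ∀ z, (derivative p).IsRoot z → p.IsRoot z) (hp : p ≠ 0) {z w : K}
    (hz : p.IsRoot z) (hw : p.IsRoot w) : z = w := by
  classical
  have hcard := congrArg Multiset.card (roots_eq_derivative_roots_add_dedup h hp)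
  rw [Multiset.card_add, IsAlgClosed.card_roots_eq_natDegree,
    IsAlgClosed.card_roots_eq_natDegree, natDegree_derivative] at hcard
  have hone : p.roots.toFinset.card ≤ 1 := by
    rw [Multiset.card_toFinset]
    omega
  exact Finset.card_le_one.1 hone z (by simpa [hp] using hz) w (by simpa [hp] using hw)

end Roots

section Derivative

open Lagrange (nodal)

variable {𝕜 ι : Type*}

theorem eval_primitive_mul_nodal_insert [Field 𝕜] [DecidableEq ι] {s : Finset ι} {a : ι}
    (ha : a ∉ s) (q : 𝕜[X]) (c : ι → 𝕜) (z : 𝕜) :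
    (primitive (q * nodal (insert a s) c)).eval z =
      (primitive (q * X * nodal s c)).eval z - c a * (primitive (q * nodal s c)).eval z := by
  have hsplit : q * nodal (insert a s) c = q * X * nodal s c - C (c a) * (q * nodal s c) := by
    rw [Lagrange.nodal_insert_eq_nodal ha]
    ring
  rw [hsplit, map_sub, primitive_C_mul, eval_sub, eval_C_mul]

theorem hasStrictFDerivAt_eval_primitive_mul_nodal [NontriviallyNormedField 𝕜] [CharZero 𝕜]
    [Finite ι] [DecidableEq ι] (s : Finset ι) (q : 𝕜[X]) (c : ι → 𝕜) (j : ι) :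
    HasStrictFDerivAt (fun c : ι → 𝕜 ↦ (primitive (q * nodal s c)).eval (c j))
      ((q * nodal s c).eval (c j) • ContinuousLinearMap.proj j -
        ∑ k ∈ s, (primitive (q * nodal (s.erase k) c)).eval (c j) •
          (ContinuousLinearMap.proj k : (ι → 𝕜) →L[𝕜] 𝕜)) c := by
  cases nonempty_fintype ι
  induction s using Finset.induction_on generalizing q with
  | empty =>
    have hq := ((primitive q).hasStrictDerivAt (c j)).comp_hasStrictFDerivAt c
      (hasStrictFDerivAt_apply (𝕜 := 𝕜) j c)
    simp only [Lagrange.nodal_empty, mul_one, Finset.sum_empty, sub_zero]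
    rwa [derivative_primitive] at hq
  | insert a s ha ih =>
    have hsum : ∑ k ∈ s, (primitive (q * nodal ((insert a s).erase k) c)).eval (c j) •
          (ContinuousLinearMap.proj k : (ι → 𝕜) →L[𝕜] 𝕜) =
        ∑ k ∈ s, (primitive (q * X * nodal (s.erase k) c)).eval (c j) • .proj k -
          c a • ∑ k ∈ s, (primitive (q * nodal (s.erase k) c)).eval (c j) • .proj k := by
      rw [Finset.smul_sum, ← Finset.sum_sub_distrib]
      refine Finset.sum_congr rfl fun k hk ↦ ?_
      rw [Finset.erase_insert_of_ne (ne_of_mem_of_not_mem hk ha).symm,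
        eval_primitive_mul_nodal_insert fun h ↦ ha (Finset.mem_of_mem_erase h)]
      module
    simp only [eval_primitive_mul_nodal_insert ha]
    refine ((ih (q * X)).sub ((hasStrictFDerivAt_apply a c).mul (ih q))).congr_fderiv ?_
    rw [Finset.sum_insert ha, Finset.erase_insert ha, hsum]
    simp only [Lagrange.nodal_insert_eq_nodal ha, eval_mul, eval_sub, eval_X, eval_C]
    module

theorem eq_zero_of_sum_smul_nodal_erase_eq_zero [Field 𝕜] [Fintype ι] [DecidableEq ι] {c v : ι → 𝕜}
    (hc : Function.Injective c) (h : ∑ k, v k • nodal (Finset.univ.erase k) c = 0) : v = 0 := by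
  ext j
  have hj := congrArg (eval (c j)) h
  have hnodal : (nodal (Finset.univ.erase j) c).eval (c j) ≠ 0 :=
    Lagrange.eval_nodal_not_at_node fun k hk ↦ hc.ne (Finset.ne_of_mem_erase hk).symm
  rw [eval_finsetSum, Finset.sum_eq_single j, eval_smul, eval_zero, smul_eq_mul] at hj
  · exact (mul_eq_zero.1 hj).resolve_right hnodal
  · intro k _ hkj
    rw [eval_smul, Lagrange.eval_nodal_at_node (Finset.mem_erase.2 ⟨hkj.symm, Finset.mem_univ j⟩),
      smul_zero]
  · simp

theorem degree_sum_smul_nodal_erase_lt [Field 𝕜] [Fintype ι] [DecidableEq ι] (c v : ι → 𝕜) :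
    (∑ k, v k • nodal (Finset.univ.erase k) c).degree < Fintype.card ι := by
  refine (degree_sum_le _ _).trans_lt ((Finset.sup_lt_iff (WithBot.bot_lt_coe _)).2 fun k _ ↦ ?_)
  refine (degree_smul_le _ _).trans_lt ?_
  rw [Lagrange.degree_nodal, Finset.card_erase_of_mem (Finset.mem_univ k)]
  exact_mod_cast Nat.sub_one_lt (Finset.card_ne_zero_of_mem (Finset.mem_univ k))

end Derivative

section Homogeneous

variable {𝕜 E F : Type*} [NormedAddCommGroup E] [NormedAddCommGroup F] {f : E → F} {n : ℕ} {η : ℝ}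

theorem exists_forall_mul_norm_pow_le_norm [RCLike 𝕜] [NormedSpace 𝕜 E] [NormedSpace 𝕜 F]
    [ProperSpace E] (hf : Continuous f) (hn : n ≠ 0) (hsmul : ∀ (t : 𝕜) x, f (t • x) = t ^ n • f x)
    (hzero : ∀ x, f x = 0 → x = 0) : ∃ η > 0, ∀ x, η * ‖x‖ ^ n ≤ ‖f x‖ := by
  obtain ⟨η, hη, hmin⟩ := (isCompact_sphere (0 : E) 1).exists_forall_le' (a := 0)
    hf.norm.continuousOn fun x hx ↦ norm_pos_iff.2 fun h ↦ ne_zero_of_mem_unit_sphere ⟨x, hx⟩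
      (hzero x h)
  refine ⟨η, hη, fun x ↦ ?_⟩
  rcases eq_or_ne x 0 with rfl | hx
  · simp [hn]
  · have hunit := hmin ((‖x‖⁻¹ : 𝕜) • x) (by simpa using norm_smul_inv_norm hx)
    rwa [hsmul, norm_smul, norm_pow, norm_inv, RCLike.norm_ofReal, abs_norm, inv_pow,
      inv_mul_eq_div, le_div_iff₀ (by positivity)] at hunit

theorem isProperMap_of_mul_norm_pow_le_norm [ProperSpace E] [ProperSpace F] (hf : Continuous f)
    (hη : 0 < η) (hn : n ≠ 0) (h : ∀ x, η * ‖x‖ ^ n ≤ ‖f x‖) : IsProperMap f := by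
  rw [isProperMap_iff_tendsto_cocompact, ← cobounded_eq_cocompact, ← cobounded_eq_cocompact,
    ← tendsto_norm_atTop_iff_cobounded]
  exact ⟨hf, tendsto_atTop_mono h
    (((tendsto_pow_atTop hn).comp tendsto_norm_cobounded_atTop).const_mul_atTop hη)⟩

theorem eventually_forall_norm_lt_of_mul_norm_pow_le_norm (hη : 0 < η) (hn : 2 ≤ n)
    (h : ∀ x, η * ‖x‖ ^ n ≤ ‖f x‖) : ∀ᶠ R in atTop, ∀ x, ‖f x‖ ≤ R → ‖x‖ < R := by
  filter_upwards [eventually_gt_atTop 1, eventually_gt_atTop η⁻¹] with R hR₁ hRη x hx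
  by_contra! hRx
  have hηR : 1 < η * R := (inv_lt_iff_one_lt_mul₀' hη).1 hRη
  have : R < R :=
    calc R < η * R * R := lt_mul_of_one_lt_left (by linarith) hηR
      _ = η * R ^ 2 := by ring
      _ ≤ η * R ^ n := by gcongr; exact hR₁.le
      _ ≤ η * ‖x‖ ^ n := by gcongr
      _ ≤ R := (h x).trans hx
  exact this.false

end Homogeneous

section CriticalValues

open Lagrange (nodal)

/-- The polynomial whose critical points, with multiplicity, are the `z i`, normalised to have
leading coefficient `1 / (card κ + 1)` and value `0` at `0`. -/
noncomputable def critPoly {𝕜 κ : Type*} [Field 𝕜] [Fintype κ] (z : κ → 𝕜) : 𝕜[X] :=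
  primitive (nodal Finset.univ z)

section CritPoly

variable {𝕜 κ : Type*} [Field 𝕜] [CharZero 𝕜] [Fintype κ]

theorem derivative_critPoly (z : κ → 𝕜) : derivative (critPoly z) = nodal Finset.univ z :=
  derivative_primitive _

theorem isRoot_derivative_critPoly_iff {z : κ → 𝕜} {w : 𝕜} :
    (derivative (critPoly z)).IsRoot w ↔ ∃ i, z i = w := by
  simp [derivative_critPoly, Lagrange.eval_nodal, Finset.prod_eq_zero_iff, sub_eq_zero,
    eq_comm (a := w)]

theorem natDegree_critPoly (z : κ → 𝕜) : (critPoly z).natDegree = Fintype.card κ + 1 := by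
  rw [critPoly, natDegree_primitive Lagrange.nodal_ne_zero, Lagrange.natDegree_nodal,
    Finset.card_univ]

theorem eval_critPoly_smul (t : 𝕜) (z : κ → 𝕜) (w : 𝕜) :
    (critPoly (t • z)).eval (t * w) = t ^ (Fintype.card κ + 1) * (critPoly z).eval w := by
  have hnodal : (nodal Finset.univ (t • z)).comp (C t * X) =
      C (t ^ Fintype.card κ) * nodal Finset.univ z := by
    simp only [Lagrange.nodal_eq, prod_comp, sub_comp, mul_comp, X_comp, C_comp, Pi.smul_apply,
      smul_eq_mul, C_mul, ← mul_sub, Finset.prod_mul_distrib, Finset.prod_const, Finset.card_univ,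
      C_pow]
  have heval := congrArg (eval w) (primitive_comp_C_mul_X (nodal Finset.univ (t • z)) t)
  rw [hnodal, primitive_C_mul] at heval
  simpa [critPoly, eval_comp, pow_succ', mul_assoc] using heval

theorem eq_of_eval_critPoly_eq_zero [IsAlgClosed 𝕜] {z : κ → 𝕜}
    (h : ∀ i, (critPoly z).eval (z i) = 0) (i j : κ) : z i = z j := by
  have hne : critPoly z ≠ 0 := primitive_ne_zero Lagrange.nodal_ne_zero
  refine eq_of_isRoot_of_derivative_isRoot_imp (fun w hw ↦ ?_) hne (h i) (h j)
  obtain ⟨k, rfl⟩ := isRoot_derivative_critPoly_iff.1 hw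
  exact h k

end CritPoly

/-- On the segment from `z j` to `z i` the derivative has two factors of size at most
`‖z i - z j‖`. -/
theorem norm_eval_critPoly_sub_le {𝕜 κ : Type*} [RCLike 𝕜] [Fintype κ] {z : κ → 𝕜} {R : ℝ}
    (hz : ∀ i, ‖z i‖ ≤ R) {i j : κ} (hij : i ≠ j) :
    ‖(critPoly z).eval (z i) - (critPoly z).eval (z j)‖ ≤
      (2 * R) ^ (Fintype.card κ - 2) * ‖z i - z j‖ ^ 3 := by
  classical
  set P := (Finset.univ.erase i).erase j
  have hcard : P.card = Fintype.card κ - 2 := by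
    rw [Finset.card_erase_of_mem (by simp [hij.symm]), Finset.card_erase_of_mem (by simp),
      Finset.card_univ, Nat.sub_sub]
  have hderiv (w : 𝕜) (hw : w ∈ segment ℝ (z j) (z i)) :
      ‖(derivative (critPoly z)).eval w‖ ≤
        ‖z i - z j‖ * (‖z i - z j‖ * (2 * R) ^ (Fintype.card κ - 2)) := by
    have hwi : ‖w - z i‖ ≤ ‖z i - z j‖ := norm_sub_rev (z j) (z i) ▸
      norm_sub_le_of_mem_segment (segment_symm ℝ (z j) (z i) ▸ hw)
    have hwj : ‖w - z j‖ ≤ ‖z i - z j‖ := norm_sub_le_of_mem_segment hw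
    have hwR : ‖w‖ ≤ R := by
      simpa using (convex_closedBall (0 : 𝕜) R).segment_subset (by simpa using hz j)
        (by simpa using hz i) hw
    have hrest : ∏ k ∈ P, ‖w - z k‖ ≤ (2 * R) ^ (Fintype.card κ - 2) := by
      rw [← hcard, ← Finset.prod_const]
      exact Finset.prod_le_prod (fun _ _ ↦ norm_nonneg _) fun k _ ↦
        (norm_sub_le w (z k)).trans (by linarith [hz k])
    rw [derivative_critPoly, Lagrange.eval_nodal, norm_prod,
      ← Finset.mul_prod_erase _ _ (Finset.mem_univ i),
      ← Finset.mul_prod_erase _ _ (Finset.mem_erase.2 ⟨hij.symm, Finset.mem_univ j⟩)]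
    gcongr
  refine (Convex.norm_image_sub_le_of_norm_hasDerivWithin_le
    (fun w _ ↦ ((critPoly z).hasDerivAt w).hasDerivWithinAt) hderiv (convex_segment (z j) (z i))
    (left_mem_segment ℝ _ _) (right_mem_segment ℝ _ _)).trans_eq ?_
  ring

variable {ι : Type*}

/-- Adjoins the point `0`, at index `none`, to a family of points of `ℂ`. Configurations of
`card ι + 1` critical points are normalised to contain `0`, and the remaining points `c : ι → ℂ`
serve as coordinates. -/
noncomputable def insertZero : (ι → ℂ) →L[ℂ] (Option ι → ℂ) :=
  ContinuousLinearMap.pi fun i ↦ i.elim 0 ContinuousLinearMap.proj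

@[simp]
theorem insertZero_none (c : ι → ℂ) : insertZero c none = 0 := rfl

@[simp]
theorem insertZero_some (c : ι → ℂ) (j : ι) : insertZero c (some j) = c j := rfl

theorem insertZero_star (c : ι → ℂ) : insertZero (star c) = star (insertZero c) := by
  ext (_ | j) <;> simp

theorem injective_insertZero_iff {c : ι → ℂ} :
    Function.Injective (insertZero c) ↔ Function.Injective c ∧ ∀ j, c j ≠ 0 := by
  rw [Option.injective_iff]
  simp [Function.comp_def]

variable [Fintype ι]

theorem norm_insertZero_le (c : ι → ℂ) (i : Option ι) : ‖insertZero c i‖ ≤ ‖c‖ := by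
  cases i with
  | none => simp
  | some j => exact norm_le_pi_norm c j

theorem nodal_insertZero (c : ι → ℂ) :
    nodal Finset.univ (insertZero c) = X * nodal Finset.univ c := by
  simp [Lagrange.nodal_eq, Fintype.prod_option]

/-- The map `V` from critical points to critical values: the values at the points `c j` of the
polynomial whose critical points are `0` and the `c j`. Its value at `0` is `0`. -/
noncomputable def critVal (c : ι → ℂ) (j : ι) : ℂ := (critPoly (insertZero c)).eval (c j)

theorem insertZero_critVal (c : ι → ℂ) (i : Option ι) :
    insertZero (critVal c) i = (critPoly (insertZero c)).eval (insertZero c i) := by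
  cases i with
  | none => exact (eval_zero_primitive _).symm
  | some j => rfl

theorem injective_insertZero_of_critVal {c : ι → ℂ}
    (h : Function.Injective (insertZero (critVal c))) : Function.Injective (insertZero c) :=
  fun i j hij ↦ h (by rw [insertZero_critVal, insertZero_critVal, hij])

theorem critVal_smul (t : ℂ) (c : ι → ℂ) :
    critVal (t • c) = t ^ (Fintype.card ι + 2) • critVal c := by
  ext j
  simpa [critVal] using eval_critPoly_smul t (insertZero c) (c j)

theorem eq_zero_of_critVal_eq_zero {c : ι → ℂ} (h : critVal c = 0) : c = 0 := by
  have hroots (i) : (critPoly (insertZero c)).eval (insertZero c i) = 0 := by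
    rw [← insertZero_critVal, h, map_zero, Pi.zero_apply]
  exact funext fun j ↦ eq_of_eval_critPoly_eq_zero hroots (some j) none

theorem hasStrictFDerivAt_critVal [DecidableEq ι] (c : ι → ℂ) :
    HasStrictFDerivAt critVal (ContinuousLinearMap.pi fun j ↦
      -∑ k, (primitive (X * nodal (Finset.univ.erase k) c)).eval (c j) •
        (ContinuousLinearMap.proj k : (ι → ℂ) →L[ℂ] ℂ)) c := by
  refine hasStrictFDerivAt_pi.2 fun j ↦ ?_
  simp only [critVal, critPoly, nodal_insertZero]
  refine (hasStrictFDerivAt_eval_primitive_mul_nodal Finset.univ X c j).congr_fderiv ?_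
  rw [eval_mul, Lagrange.eval_nodal_at_node (Finset.mem_univ j), mul_zero]
  module

theorem continuous_critVal : Continuous (critVal (ι := ι)) := by
  classical
  exact continuous_iff_continuousAt.2 fun c ↦ (hasStrictFDerivAt_critVal c).continuousAt

theorem exists_hasStrictFDerivAt_critVal {c : ι → ℂ} (hc : Function.Injective (insertZero c)) :
    ∃ V' : (ι → ℂ) ≃L[ℂ] (ι → ℂ), HasStrictFDerivAt critVal (V' : (ι → ℂ) →L[ℂ] (ι → ℂ)) c := by
  classical
  obtain ⟨hinj, hne⟩ := injective_insertZero_iff.1 hc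
  have hV := hasStrictFDerivAt_critVal c
  set L : (ι → ℂ) →L[ℂ] (ι → ℂ) := ContinuousLinearMap.pi fun j ↦
    -∑ k, (primitive (X * nodal (Finset.univ.erase k) c)).eval (c j) • ContinuousLinearMap.proj k
  have hL (v : ι → ℂ) (j : ι) :
      L v j = -(primitive (X * ∑ k, v k • nodal (Finset.univ.erase k) c)).eval (c j) := by
    simp [L, Finset.mul_sum, eval_finsetSum, mul_comm]
  have hLinj : Function.Injective L := (injective_iff_map_eq_zero L).2 fun v hv ↦
    eq_zero_of_sum_smul_nodal_erase_eq_zero hinj <| eq_zero_of_eval_primitive_X_mul_eq_zero hinj hne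
      (degree_sum_smul_nodal_erase_lt c v) fun j ↦ by simpa [hv] using hL v j
  exact ⟨(LinearEquiv.ofInjectiveEndo L.toLinearMap hLinj).toContinuousLinearEquiv, hV⟩

theorem exists_forall_mul_norm_pow_le_norm_critVal (ι : Type*) [Fintype ι] :
    ∃ η > 0, ∀ c : ι → ℂ, η * ‖c‖ ^ (Fintype.card ι + 2) ≤ ‖critVal c‖ :=
  exists_forall_mul_norm_pow_le_norm continuous_critVal (Nat.succ_ne_zero _) critVal_smul
    fun _ ↦ eq_zero_of_critVal_eq_zero

theorem isProperMap_critVal : IsProperMap (critVal (ι := ι)) := by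
  obtain ⟨η, hη, h⟩ := exists_forall_mul_norm_pow_le_norm_critVal ι
  exact isProperMap_of_mul_norm_pow_le_norm continuous_critVal hη (Nat.succ_ne_zero _) h

theorem eventually_forall_norm_lt_of_norm_critVal_le :
    ∀ᶠ R in atTop, ∀ c : ι → ℂ, ‖critVal c‖ ≤ R → ‖c‖ < R := by
  obtain ⟨η, hη, h⟩ := exists_forall_mul_norm_pow_le_norm_critVal ι
  exact eventually_forall_norm_lt_of_mul_norm_pow_le_norm hη (Nat.le_add_left 2 _) h

end CriticalValues

section Configurations

theorem finite_setOf_not_injective_add_smul {𝕜 κ : Type*} [Field 𝕜] [Finite κ] {z w : κ → 𝕜}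
    (h : ∀ i j, i ≠ j → z i ≠ z j ∨ w i ≠ w j) :
    {t : 𝕜 | ¬ Function.Injective (z + t • w)}.Finite := by
  have hcollide (i j : κ) :
      {t : 𝕜 | i ≠ j ∧ z i + t * w i = z j + t * w j}.Subsingleton := by
    rintro s ⟨hij, hs⟩ t ⟨-, ht⟩
    by_contra! hst
    have hw : w i = w j := sub_eq_zero.1 <| (mul_eq_zero.1
      (by linear_combination hs - ht : (s - t) * (w i - w j) = 0)).resolve_left (sub_ne_zero.2 hst)
    exact (h i j hij).elim (fun hz ↦ hz (by simpa [hw] using hs)) (fun hw' ↦ hw' hw)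
  refine (finite_iUnion fun i ↦ finite_iUnion fun j ↦ (hcollide i j).finite).subset fun t ht ↦ ?_
  obtain ⟨i, j, heq, hne⟩ := Function.not_injective_iff.1 ht
  exact mem_iUnion₂.2 ⟨i, j, hne, heq⟩

theorem exists_differentiable_mapsTo_compl_of_countable {S : Set ℂ} (hS : S.Countable)
    (h₀ : 0 ∉ S) (h₁ : 1 ∉ S) :
    ∃ g : ℂ → ℂ, Differentiable ℂ g ∧ g 0 = 0 ∧ g 1 = 1 ∧ MapsTo g (segment ℝ 0 1) Sᶜ := by
  -- The parabolas `t + i r t (1 - t)` for real `r` meet only in `0` and `1`.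
  obtain ⟨r, hr⟩ := ((hS.image fun w ↦ w.im / (w.re * (1 - w.re))).dense_compl ℝ).nonempty
  refine ⟨fun z ↦ z + r * Complex.I * (z * (1 - z)), by fun_prop, by simp, by simp, ?_⟩
  rintro _ ⟨a, t, -, -, hat, rfl⟩ hmem
  obtain rfl : a = 1 - t := by linarith
  have hseg : (1 - t) • (0 : ℂ) + t • 1 = t := by simp
  rw [hseg] at hmem
  rcases eq_or_ne t 0 with rfl | ht₀
  · exact h₀ (by simpa using hmem)
  rcases eq_or_ne t 1 with rfl | ht₁
  · exact h₁ (by simpa using hmem)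
  have ht₁ : 1 - t ≠ 0 := sub_ne_zero.2 ht₁.symm
  exact hr ⟨_, hmem, by simp [ht₀, ht₁]⟩

theorem exists_differentiable_forall_injective_insertZero {ι : Type*} [Finite ι] {x y : ι → ℂ}
    (hx : Function.Injective (insertZero x)) (hy : Function.Injective (insertZero y)) :
    ∃ f : ℂ → ι → ℂ, Differentiable ℂ f ∧ f 0 = x ∧ f 1 = y ∧
      ∀ z ∈ segment ℝ 0 1, Function.Injective (insertZero (f z)) := by
  cases nonempty_fintype ι
  have hfin := finite_setOf_not_injective_add_smul (z := insertZero x) (w := insertZero (y - x))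
    fun i j hij ↦ .inl (hx.ne hij)
  simp only [← map_smul, ← map_add] at hfin
  obtain ⟨g, hg, hg₀, hg₁, hgmaps⟩ := exists_differentiable_mapsTo_compl_of_countable
    hfin.countable (by simpa using hx) (by simpa using hy)
  exact ⟨fun z ↦ x + g z • (y - x), by fun_prop, by simp [hg₀], by simp [hg₁],
    fun z hz ↦ not_not.1 (hgmaps hz)⟩

theorem exists_injective_insertZero (ι : Type*) [Countable ι] :
    ∃ c : ι → ℂ, Function.Injective (insertZero c) := by
  obtain ⟨e, he⟩ := Countable.exists_injective_nat (Option ι)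
  refine ⟨fun j ↦ e (some j) - e none, ?_⟩
  convert (sub_left_injective (b := (e none : ℂ))).comp (Nat.cast_injective.comp he)
  ext (_ | j) <;> simp

theorem exists_injective_insertZero_critVal (ι : Type*) [Fintype ι] :
    ∃ x : ι → ℂ, Function.Injective (insertZero (critVal x)) := by
  obtain ⟨c, hc⟩ := exists_injective_insertZero ι
  obtain ⟨V', hV'⟩ := exists_hasStrictFDerivAt_critVal hc
  have hrange : range critVal ∈ 𝓝 (critVal c) := hV'.map_nhds_eq_of_equiv ▸ range_mem_map
  have hline : Continuous fun t : ℂ ↦ critVal c + t • c := by fun_prop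
  have hinf : {t : ℂ | critVal c + t • c ∈ range critVal}.Infinite :=
    infinite_of_mem_nhds 0 (hline.continuousAt.preimage_mem_nhds (by simpa using hrange))
  have hfin := finite_setOf_not_injective_add_smul (z := insertZero (critVal c))
    (w := insertZero c) fun i j hij ↦ .inr (hc.ne hij)
  obtain ⟨t, ⟨x, hx⟩, ht⟩ := (hinf.sdiff hfin).nonempty
  exact ⟨x, by simpa [hx] using ht⟩

/-- The configurations `c` of norm less than `R` such that any two of the points `0` and `c j` are
more than `δ` apart. These are the sets `W` on which the contraction argument is run. -/
def separatedConfigs (ι : Type*) [Fintype ι] (R δ : ℝ) : Set (ι → ℂ) :=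
  {c | ‖c‖ < R ∧ Pairwise fun i j ↦ δ < dist (insertZero c i) (insertZero c j)}

variable {ι : Type*} [Fintype ι] {R δ : ℝ}

theorem isOpen_separatedConfigs : IsOpen (separatedConfigs ι R δ) := by
  simp only [separatedConfigs, Pairwise, ofPred_and, ofPred_forall]
  refine (isOpen_lt continuous_norm continuous_const).inter <| isOpen_iInter_of_finite fun i ↦
    isOpen_iInter_of_finite fun j ↦ isOpen_iInter_of_finite fun _ ↦
      isOpen_lt continuous_const ?_
  fun_prop

theorem isBounded_separatedConfigs : Bornology.IsBounded (separatedConfigs ι R δ) :=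
  isBounded_ball.subset fun _ hc ↦ mem_ball_zero_iff.2 hc.1

theorem star_mem_separatedConfigs {c : ι → ℂ} (hc : c ∈ separatedConfigs ι R δ) :
    star c ∈ separatedConfigs ι R δ :=
  ⟨(norm_star c).trans_lt hc.1, fun i j hij ↦ (hc.2 hij).trans_eq <| by
    simp only [insertZero_star, Pi.star_apply, dist_eq_norm, ← star_sub, norm_star]⟩

theorem injective_insertZero_of_mem_separatedConfigs (hδ : 0 ≤ δ) {c : ι → ℂ}
    (hc : c ∈ separatedConfigs ι R δ) : Function.Injective (insertZero c) := fun _ _ hij ↦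
  of_not_not fun hne ↦ dist_pos.1 (hδ.trans_lt (hc.2 hne)) hij

theorem closure_separatedConfigs_subset : closure (separatedConfigs ι R δ) ⊆
    {c | ‖c‖ ≤ R ∧ Pairwise fun i j ↦ δ ≤ dist (insertZero c i) (insertZero c j)} := by
  refine closure_minimal (fun c hc ↦ ⟨hc.1.le, hc.2.mono fun _ _ ↦ le_of_lt⟩) ?_
  simp only [Pairwise, ofPred_and, ofPred_forall]
  refine (isClosed_le continuous_norm continuous_const).inter <| isClosed_iInter fun i ↦
    isClosed_iInter fun j ↦ isClosed_iInter fun _ ↦ isClosed_le continuous_const ?_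
  fun_prop

theorem eventually_subset_separatedConfigs {K : Set (ι → ℂ)} (hK : IsCompact K)
    (hinj : ∀ c ∈ K, Function.Injective (insertZero c)) :
    ∀ᶠ R in atTop, ∀ᶠ δ in 𝓝[>] 0, K ⊆ separatedConfigs ι R δ := by
  obtain ⟨B, hB⟩ := hK.isBounded.exists_norm_le
  have hsep : ∀ᶠ δ in 𝓝[>] 0, ∀ i j, i ≠ j → ∀ c ∈ K,
      δ < dist (insertZero c i) (insertZero c j) := by
    refine eventually_all.2 fun i ↦ eventually_all.2 fun j ↦ eventually_all.2 fun hij ↦ ?_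
    obtain ⟨δ₀, hδ₀, hmin⟩ := hK.exists_forall_le' (a := 0)
      (f := fun c ↦ dist (insertZero c i) (insertZero c j)) (by fun_prop)
      fun c hc ↦ dist_pos.2 ((hinj c hc).ne hij)
    filter_upwards [Ioo_mem_nhdsGT hδ₀] with δ hδ c hc
    exact hδ.2.trans_le (hmin c hc)
  filter_upwards [eventually_gt_atTop B] with R hR
  filter_upwards [hsep] with δ hδ c hc
  exact ⟨(hB c hc).trans_lt hR, fun i j hij ↦ hδ i j hij c hc⟩

/-- Values at critical points that are at most `δ` apart differ by `O(δ ^ 3)`, which is less than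
`δ` for small `δ`. -/
theorem eventually_critVal_preimage_closure_separatedConfigs_subset :
    ∀ᶠ R in atTop, ∀ᶠ δ in 𝓝[>] 0,
      critVal ⁻¹' closure (separatedConfigs ι R δ) ⊆ separatedConfigs ι R δ := by
  filter_upwards [eventually_forall_norm_lt_of_norm_critVal_le (ι := ι), eventually_ge_atTop 0]
    with R hR hR₀
  set B := (2 * R) ^ (Fintype.card (Option ι) - 2)
  have hsmall : ∀ᶠ δ : ℝ in 𝓝 0, B * δ ^ 2 < 1 :=
    ((continuous_const.mul (continuous_pow 2)).tendsto' 0 0 (by simp)).eventually_lt_const one_pos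
  filter_upwards [hsmall.filter_mono nhdsWithin_le_nhds, self_mem_nhdsWithin] with δ hBδ hδ c hc
  have hδ : 0 < δ := hδ
  obtain ⟨hVR, hVsep⟩ := closure_separatedConfigs_subset hc
  have hcR := hR c hVR
  refine ⟨hcR, fun i j hij ↦ ?_⟩
  by_contra! hclose
  have : δ < δ :=
    calc δ ≤ dist (insertZero (critVal c) i) (insertZero (critVal c) j) := hVsep hij
      _ ≤ B * dist (insertZero c i) (insertZero c j) ^ 3 := by
        simpa only [dist_eq_norm, insertZero_critVal] using
          norm_eval_critPoly_sub_le (fun i ↦ (norm_insertZero_le c i).trans hcR.le) hij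
      _ ≤ B * δ ^ 3 := by gcongr
      _ = B * δ ^ 2 * δ := by ring
      _ < δ := mul_lt_of_lt_one_left hδ hBδ
  exact this.false

theorem exists_critVal_eq_star (ι : Type*) [Fintype ι] :
    ∃ c : ι → ℂ, Function.Injective (insertZero c) ∧ critVal c = star c := by
  obtain ⟨x, hx⟩ := exists_injective_insertZero_critVal ι
  obtain ⟨f, hf, hf₀, hf₁, hfinj⟩ := exists_differentiable_forall_injective_insertZero
    (x := star (critVal x)) (insertZero_star (critVal x) ▸ star_injective.comp hx)
    (injective_insertZero_of_critVal hx)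
  obtain ⟨R, hR⟩ := ((eventually_subset_separatedConfigs
    (isCompact_segment_zero_one.image hf.continuous) (forall_mem_image.2 hfinj)).and
    (eventually_critVal_preimage_closure_separatedConfigs_subset (ι := ι))).exists
  obtain ⟨δ, ⟨hfδ, hVδ⟩, hδ⟩ := ((hR.1.and hR.2).and self_mem_nhdsWithin).exists
  have hinj (c) (hc : c ∈ separatedConfigs ι R δ) : Function.Injective (insertZero c) :=
    injective_insertZero_of_mem_separatedConfigs (le_of_lt hδ) hc
  obtain ⟨c, hc, hVc⟩ := exists_apply_eq_star (W := separatedConfigs ι R δ) isProperMap_critVal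
    (fun c hc ↦ exists_hasStrictFDerivAt_critVal (injective_insertZero_of_critVal (hinj _ hc)))
    isOpen_separatedConfigs isBounded_separatedConfigs (fun _ ↦ star_mem_separatedConfigs) hVδ hf
    (mapsTo_iff_image_subset.2 hfδ) (by rw [hf₀, hf₁, star_star])
  exact ⟨c, hinj c hc, hVc⟩

end Configurations

/-- Crofoot–Sarason conjecture / Geyer's theorem: For every `d ≥ 2`
there exist a polynomial `p` of degree `d` and `d − 1` distinct points `c_j ∈ ℂ` with
`p′(c_j) = 0` and `p(c_j) = conj(c_j)` for all `j`. -/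
theorem stmt_19 (d : ℕ) (hd : 2 ≤ d) :
    ∃ p : Polynomial ℂ, p.natDegree = d ∧
      ∃ c : Fin (d - 1) → ℂ, Function.Injective c ∧
        ∀ j, (derivative p).eval (c j) = 0 ∧
          p.eval (c j) = (starRingEnd ℂ) (c j) := by
  obtain ⟨m, rfl⟩ := Nat.exists_eq_add_of_le' hd
  obtain ⟨c, hinj, hc⟩ := exists_critVal_eq_star (Fin m)
  refine ⟨critPoly (insertZero c), by simp [natDegree_critPoly], insertZero c ∘ finSuccEquiv m,
    hinj.comp (finSuccEquiv m).injective, fun j ↦ ⟨?_, ?_⟩⟩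
  · exact isRoot_derivative_critPoly_iff.2 ⟨_, rfl⟩
  · rw [Function.comp_apply, ← insertZero_critVal, hc, insertZero_star]
    rfl
end
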